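/- arXiv:math/0408204 — 3 statements merged into one kernel-verified Lean document; each statement's English description precedes it below -/
import Mathlib

section
/- Let n ≥ 1 and let x_1,...,x_{2n}, a_1,...,a_{2n}, c_1,...,c_{2n} be variables with the x_i pairwise distinct. Then Pf[ (a_i − a_j)(c_i − c_j)/(x_i − x_j) ]_{1≤i<j≤2n} = V^n(X,1;A,1) · V^n(X,1;C,1) / Π_{1≤i<j≤2n}(x_i − x_j), where V^n(X,1;A,1) is the determinant of the 2n×2n matrix whose (i,j) entry is a_i x_i^{n−j} for 1≤j≤n and x_i^{2n−j} for n+1≤j≤2n. -/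
open Finset

def pfMatchings (n : ℕ) : Finset (Equiv.Perm (Fin (2 * n))) :=
  Finset.univ.filter (fun σ =>
    (∀ i : Fin n, σ ⟨2 * i.1, by have := i.2; omega⟩ < σ ⟨2 * i.1 + 1, by have := i.2; omega⟩) ∧
    (∀ i j : Fin n, i < j →
      σ ⟨2 * i.1, by have := i.2; omega⟩ < σ ⟨2 * j.1, by have := j.2; omega⟩))

def pf {R : Type*} [CommRing R] {n : ℕ} (A : Matrix (Fin (2 * n)) (Fin (2 * n)) R) : R :=
  ∑ σ ∈ pfMatchings n,
    ((Equiv.Perm.sign σ : ℤ) : R) *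
      ∏ i : Fin n,
        A (σ ⟨2 * i.1, by have := i.2; omega⟩) (σ ⟨2 * i.1 + 1, by have := i.2; omega⟩)

/-- `V^n(X,Y;A,B)`: the determinant of the `2n × 2n` matrix whose `(i,j)` entry
(0-indexed columns) is `a_i x_i^{n−1−j} y_i^j` for `j < n` and
`b_i x_i^{2n−1−j} y_i^{j−n}` for `n ≤ j < 2n`. -/
def Vdet {R : Type*} [CommRing R] (n : ℕ) (x y a b : Fin (2 * n) → R) : R :=
  Matrix.det (Matrix.of fun i j : Fin (2 * n) =>
    if (j : ℕ) < n then a i * x i ^ (n - 1 - (j : ℕ)) * y i ^ (j : ℕ)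
    else b i * x i ^ (2 * n - 1 - (j : ℕ)) * y i ^ ((j : ℕ) - n))


/-- Pairwise difference product. -/
def vprod {F : Type*} [CommRing F] {m : ℕ} (x : Fin m → F) : F :=
  ∏ i : Fin m, ∏ j ∈ Ioi i, (x i - x j)

theorem vprod_eq_det {F : Type*} [CommRing F] {m : ℕ} (x : Fin m → F) :
    vprod x = (Matrix.vandermonde (fun i => - x i)).det := by
  rw [Matrix.det_vandermonde, vprod]
  refine Finset.prod_congr rfl fun i _ => Finset.prod_congr rfl fun j _ => by ring

theorem vprod_succ {F : Type*} [CommRing F] {m : ℕ} (x : Fin (m + 1) → F) :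
    vprod x = (∏ k : Fin m, (x 0 - x k.succ)) * vprod (fun k => x k.succ) := by
  rw [vprod, Fin.prod_univ_succ, Fin.prod_Ioi_zero, vprod]
  simp only [Fin.prod_Ioi_succ]

theorem vprod_succAbove {F : Type*} [CommRing F] {m : ℕ} (x : Fin (m + 1) → F)
    (j : Fin (m + 1)) :
    vprod x = (-1) ^ (j : ℕ) *
      ((∏ k : Fin m, (x j - x (j.succAbove k))) * vprod (fun k => x (j.succAbove k))) := by
  have h := vprod_succ (fun k => x (j.cycleRange.symm k))
  simp only [Fin.cycleRange_symm_zero, Fin.cycleRange_symm_succ] at h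
  rw [← h, vprod_eq_det, vprod_eq_det]
  have h2 := Matrix.det_permute j.cycleRange.symm (Matrix.vandermonde (fun i => - x i))
  have h3 : (Matrix.vandermonde fun i => -x (j.cycleRange.symm i)) =
      (Matrix.vandermonde (fun i => - x i)).submatrix j.cycleRange.symm id := by
    ext a b
    simp [Matrix.vandermonde]
  rw [h3, h2, Equiv.Perm.sign_symm, Fin.sign_cycleRange]
  push_cast
  rw [← mul_assoc, ← mul_pow]
  simp

theorem vprod_ne_zero {F : Type*} [Field F] {m : ℕ} (x : Fin m → F)
    (hx : Function.Injective x) : vprod x ≠ 0 := by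
  rw [vprod_eq_det, Matrix.det_vandermonde_ne_zero_iff]
  intro i j h
  exact hx (neg_injective h)

/-- Entries (ascending column order). -/
def ent {F : Type*} [CommRing F] (n : ℕ) (x a : F) (j : ℕ) : F :=
  if j < n then x ^ j else a * x ^ (j - n)

/-- Determinant with ascending column order. -/
def W {F : Type*} [CommRing F] (n : ℕ) {m : ℕ} (x a : Fin m → F) : F :=
  (Matrix.of fun i j : Fin m => ent n (x i) (a i) (j : ℕ)).det

theorem Vdet_eq_W {F : Type*} [CommRing F] (n : ℕ) (x a : Fin (2 * n) → F) :
    Vdet n x 1 a 1 = ((Equiv.Perm.sign (Fin.revPerm (n := 2 * n)) : ℤ) : F) * W n x a := by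
  rw [W, ← Matrix.det_permute', Vdet]
  congr 1
  ext i j
  have := j.2
  simp only [Matrix.of_apply, Matrix.submatrix_apply, id, Fin.revPerm_apply, Fin.val_rev, ent,
    Pi.one_apply, one_pow, mul_one, one_mul]
  by_cases h : (j : ℕ) < n
  · rw [if_pos h, if_neg (by omega)]
    congr 2; omega
  · rw [if_neg h, if_pos (by omega)]
    congr 1; omega

theorem Vdet_mul {F : Type*} [CommRing F] (n : ℕ) (x a c : Fin (2 * n) → F) :
    Vdet n x 1 a 1 * Vdet n x 1 c 1 = W n x a * W n x c := by
  rw [Vdet_eq_W, Vdet_eq_W, mul_mul_mul_comm, ← Int.cast_mul, ← Units.val_mul,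
    Int.units_mul_self]
  simp

/-- Column-reduced entries. -/
def ent' {F : Type*} [CommRing F] (n : ℕ) (t x a : F) (j : ℕ) : F :=
  if j = 0 then 1 else if j ≤ n then (x - t) * x ^ (j - 1) else
    if j = n + 1 then a else (x - t) * (a * x ^ (j - n - 2))

theorem W_reduce {F : Type*} [CommRing F] (n m : ℕ) (t : F) (x a : Fin (m + 1) → F) :
    W (n + 1) x a = (Matrix.of fun i j : Fin (m + 1) => ent' n t (x i) (a i) (j : ℕ)).det := by
  rw [W]
  refine Matrix.det_eq_of_forall_col_eq_smul_add_pred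
    (fun j => if (j : ℕ) = n then 0 else t) ?_ ?_
  · intro i
    simp [ent, ent']
  · intro i j
    simp only [Matrix.of_apply, ent, ent', Fin.val_succ, Fin.val_castSucc]
    rcases lt_trichotomy (j : ℕ) n with h | h | h
    · rw [if_pos (by omega), if_neg (by omega), if_pos (by omega), if_neg (by omega),
        if_pos (by omega)]
      simp only [Nat.add_sub_cancel]; ring
    · simp [h]
    · obtain ⟨d, hd⟩ := Nat.exists_eq_add_of_lt h
      rw [if_neg (by omega), if_neg (by omega), if_neg (by omega), if_neg (by omega),
        if_neg (by omega), if_neg (by omega)]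
      have e1 : (j : ℕ) + 1 - (n + 1) = d + 1 := by omega
      have e2 : (j : ℕ) + 1 - n - 2 = d := by omega
      have e3 : (j : ℕ) - (n + 1) = d := by omega
      rw [e1, e2, e3]; ring

theorem ent'_self {F : Type*} [CommRing F] (n : ℕ) (t a : F) (j : ℕ) :
    ent' n t t a j = if j = 0 then 1 else if j = n + 1 then a else 0 := by
  unfold ent'
  split_ifs <;> first | rfl | (exfalso; omega) | simp

theorem W_collapse {F : Type*} [CommRing F] (n : ℕ) (x a : Fin (2 * n + 1 + 1) → F)
    (j : Fin (2 * n + 1)) (h : x 0 = x j.succ) :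
    W (n + 1) x a = (-1) ^ ((j : ℕ) + n) * (a j.succ - a 0) *
      (∏ k : Fin (2 * n), (x (j.succAbove k).succ - x j.succ)) *
      W n (fun k => x (j.succAbove k).succ) (fun k => a (j.succAbove k).succ) := by
  have hD : (∏ k : Fin (2 * n), (x (j.succAbove k).succ - x j.succ)) *
      W n (fun k => x (j.succAbove k).succ) (fun k => a (j.succAbove k).succ) =
      (Matrix.of fun i k : Fin (2 * n) => ent' n (x j.succ) (x (j.succAbove i).succ)
        (a (j.succAbove i).succ) (if (k : ℕ) < n then (k : ℕ) + 1 else (k : ℕ) + 2)).det := by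
    rw [W, ← Matrix.det_mul_column]
    congr 1
    ext i k
    simp only [Matrix.of_apply, ent, ent']
    by_cases hk : (k : ℕ) < n
    · rw [if_pos hk, if_pos hk, if_neg (by omega), if_pos (by omega)]
      simp
    · rw [if_neg hk, if_neg hk, if_neg (by omega), if_neg (by omega), if_neg (by omega)]
      congr 3; omega
  rw [mul_assoc, hD, W_reduce n _ (x j.succ)]
  set N : Matrix (Fin (2 * n + 1 + 1)) (Fin (2 * n + 1 + 1)) F :=
    Matrix.of fun i k => ent' n (x j.succ) (x i) (a i) (k : ℕ) with hN
  set D := (Matrix.of fun i k : Fin (2 * n) => ent' n (x j.succ) (x (j.succAbove i).succ)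
        (a (j.succAbove i).succ) (if (k : ℕ) < n then (k : ℕ) + 1 else (k : ℕ) + 2)) with hDd
  let q : Fin (2 * n + 1 + 1) := ⟨n + 1, by omega⟩
  let p : Fin (2 * n + 1) := ⟨n, by omega⟩
  have sA : ∀ (m : ℕ) (u : Fin (m + 1)) (v : Fin m),
      ((u.succAbove v : Fin (m + 1)) : ℕ) = if (v : ℕ) < u then (v : ℕ) else v + 1 := by
    intro m u v
    simp only [Fin.succAbove, Fin.lt_def, Fin.val_castSucc]
    split_ifs <;> simp
  have h0 : ∀ k, N 0 k = if (k : ℕ) = 0 then 1 else if (k : ℕ) = n + 1 then a 0 else 0 := by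
    intro k
    simp only [hN, Matrix.of_apply, h, ent'_self]
  have hj : ∀ k, N j.succ k =
      if (k : ℕ) = 0 then 1 else if (k : ℕ) = n + 1 then a j.succ else 0 := by
    intro k
    simp only [hN, Matrix.of_apply, ent'_self]
  have m1 : (N.submatrix Fin.succ (Fin.succAbove 0)).det = (-1) ^ ((j : ℕ) + n) * a j.succ * D.det := by
    rw [Matrix.det_succ_row _ j, Fintype.sum_eq_single p]
    · have : (N.submatrix Fin.succ (Fin.succAbove 0)).submatrix j.succAbove p.succAbove = D := by
        ext i k
        simp only [Matrix.submatrix_apply, hN, hDd, Matrix.of_apply]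
        congr 1
        rw [sA, sA]
        simp only [p, Fin.val_zero]
        split_ifs <;> omega
      rw [this, Matrix.submatrix_apply, hj, sA]
      simp [p]
    · intro k hk
      have hk' : (k : ℕ) ≠ n := fun e => hk (Fin.ext e)
      rw [Matrix.submatrix_apply, hj, sA]
      simp [hk']
  have m2 : (N.submatrix Fin.succ q.succAbove).det = (-1) ^ (j : ℕ) * D.det := by
    rw [Matrix.det_succ_row _ j, Fintype.sum_eq_single 0]
    · have : (N.submatrix Fin.succ q.succAbove).submatrix j.succAbove (Fin.succAbove 0) = D := by
        ext i k
        simp only [Matrix.submatrix_apply, hN, hDd, Matrix.of_apply]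
        congr 1
        rw [sA, sA]
        simp only [q, Fin.val_zero, Nat.not_lt_zero, if_false, Nat.add_lt_add_iff_right]
      rw [this, Matrix.submatrix_apply, hj, sA]
      simp [q]
    · intro k hk
      have hk' : (k : ℕ) ≠ 0 := fun e => hk (Fin.ext e)
      rw [Matrix.submatrix_apply, hj, sA]
      simp only [q]
      have e1 : (if (k : ℕ) < n + 1 then (k : ℕ) else k + 1) ≠ 0 := by split_ifs <;> omega
      have e2 : (if (k : ℕ) < n + 1 then (k : ℕ) else k + 1) ≠ n + 1 := by split_ifs <;> omega
      rw [if_neg e1, if_neg e2]; simp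
  rw [Matrix.det_succ_row_zero, Fintype.sum_eq_add 0 q]
  · rw [m1, m2, h0, h0]
    simp only [q, Fin.val_zero, if_true, if_neg (Nat.succ_ne_zero n)]
    ring
  · intro e
    have := congrArg Fin.val e
    simp [q] at this
  · rintro k ⟨k1, k2⟩
    have k1' : (k : ℕ) ≠ 0 := fun e => k1 (Fin.ext e)
    have k2' : (k : ℕ) ≠ n + 1 := fun e => k2 (Fin.ext e)
    rw [h0, if_neg k1', if_neg k2']; simp

open Polynomial in
theorem W_poly {F : Type*} [Field F] (n m : ℕ) (hm : m + 1 ≤ 2 * (n + 1)) (a0 : F)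
    (x a : Fin m → F) :
    ∃ P : F[X], P.natDegree ≤ n ∧
      ∀ t, P.eval t = W (n + 1) (Fin.cons t x : Fin (m + 1) → F) (Fin.cons a0 a : Fin (m + 1) → F) := by
  let cof : Fin (m + 1) → F := fun k =>
    (Matrix.of fun (i : Fin m) (l : Fin m) =>
      ent (n + 1) (x i) (a i) ((k.succAbove l : Fin (m + 1)) : ℕ)).det
  refine ⟨∑ k : Fin (m + 1), C ((-1) ^ (k : ℕ) * cof k) *
    (ent (n + 1) (X : F[X]) (C a0) (k : ℕ)), ?_, ?_⟩
  · refine natDegree_sum_le_of_forall_le _ _ fun k _ => ?_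
    refine (natDegree_C_mul_le _ _).trans ?_
    have := k.2
    unfold ent
    split_ifs with h
    · rw [natDegree_X_pow]; omega
    · refine (natDegree_C_mul_le _ _).trans ?_
      rw [natDegree_X_pow]; omega
  · intro t
    rw [W, Matrix.det_succ_row_zero, eval_finsetSum]
    refine Finset.sum_congr rfl fun k _ => ?_
    have h1 : eval t (ent (n + 1) (X : F[X]) (C a0) (k : ℕ)) = ent (n + 1) t a0 k := by
      unfold ent; split_ifs <;> simp
    rw [eval_mul, eval_C, h1]
    simp only [Matrix.of_apply, Fin.cons_zero]
    have h2 : ((Matrix.of fun i j : Fin (m + 1) => ent (n + 1) ((Fin.cons t x : Fin (m + 1) → F) i)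
        ((Fin.cons a0 a : Fin (m + 1) → F) i) (j : ℕ)).submatrix Fin.succ k.succAbove).det = cof k := by
      congr 1
    rw [h2]; ring

theorem W_recursion {F : Type*} [Field F] (n : ℕ) (x a c : Fin (2 * n + 1 + 1) → F)
    (hx : Function.Injective x) :
    W (n + 1) x a * W (n + 1) x c / vprod x =
      ∑ j : Fin (2 * n + 1), (-1) ^ (j : ℕ) *
        ((a 0 - a j.succ) * (c 0 - c j.succ) / (x 0 - x j.succ)) *
        (W n (fun k => x (j.succAbove k).succ) (fun k => a (j.succAbove k).succ) *
         W n (fun k => x (j.succAbove k).succ) (fun k => c (j.succAbove k).succ) /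
         vprod (fun k => x (j.succAbove k).succ)) := by
  obtain ⟨P, hP, hPe⟩ := W_poly n (2 * n + 1) (by omega) (a 0) (fun k => x k.succ) (fun k => a k.succ)
  obtain ⟨Q, hQ, hQe⟩ := W_poly n (2 * n + 1) (by omega) (c 0) (fun k => x k.succ) (fun k => c k.succ)
  have cons_eq : ∀ y : Fin (2 * n + 1 + 1) → F,
      (Fin.cons (y 0) (fun k => y k.succ) : Fin (2 * n + 1 + 1) → F) = y := Fin.cons_self_tail
  have hinj : Function.Injective (fun k : Fin (2 * n + 1) => x k.succ) :=
    hx.comp (Fin.succ_injective _)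
  have hdeg : (P * Q).degree < ((#(Finset.univ : Finset (Fin (2 * n + 1))) : ℕ) : WithBot ℕ) := by
    refine lt_of_le_of_lt Polynomial.degree_le_natDegree ?_
    have := Polynomial.natDegree_mul_le (p := P) (q := Q)
    rw [Finset.card_univ, Fintype.card_fin]
    exact_mod_cast (by omega)
  have hL := Lagrange.eq_interpolate (s := Finset.univ) (v := fun k : Fin (2 * n + 1) => x k.succ)
    hinj.injOn hdeg
  have hne : ∀ k : Fin (2 * n + 1), x 0 ≠ x k.succ := fun k e => (Fin.succ_ne_zero k) (hx e).symm
  have hE := congrArg (Polynomial.eval (x 0)) hL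
  rw [Lagrange.eval_interpolate_not_at_node _ (fun k _ => hne k), Lagrange.eval_nodal,
    Polynomial.eval_mul, hPe, hQe, cons_eq, cons_eq, cons_eq] at hE
  have hp0 : (∏ k : Fin (2 * n + 1), (x 0 - x k.succ)) ≠ 0 :=
    Finset.prod_ne_zero_iff.mpr fun k _ => sub_ne_zero.mpr (hne k)
  have hv1 := vprod_ne_zero _ hinj
  rw [vprod_succ, hE, mul_div_mul_left _ _ hp0, Finset.sum_div]
  refine Finset.sum_congr rfl fun j _ => ?_
  have hc : ∀ (b : Fin (2 * n + 1 + 1) → F),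
      W (n + 1) (Fin.cons (x j.succ) (fun k => x k.succ) : Fin (2 * n + 1 + 1) → F)
        (Fin.cons (b 0) (fun k => b k.succ) : Fin (2 * n + 1 + 1) → F) =
      (-1) ^ ((j : ℕ) + n) * (b j.succ - b 0) *
      (∏ k : Fin (2 * n), (x (j.succAbove k).succ - x j.succ)) *
      W n (fun k => x (j.succAbove k).succ) (fun k => b (j.succAbove k).succ) := by
    intro b
    rw [W_collapse n _ _ j (by simp)]
    simp
  have hinj2 : Function.Injective (fun k : Fin (2 * n) => x (j.succAbove k).succ) :=
    hinj.comp (Fin.succAbove_right_injective)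
  have hv2 := vprod_ne_zero _ hinj2
  have hw : Lagrange.nodalWeight Finset.univ (fun k : Fin (2 * n + 1) => x k.succ) j =
      (∏ k : Fin (2 * n), (x j.succ - x (j.succAbove k).succ))⁻¹ := by
    rw [Lagrange.nodalWeight, ← Finset.prod_inv_distrib, ← Finset.compl_singleton,
      ← Fin.image_succAbove_univ, Finset.prod_image (Fin.succAbove_right_injective.injOn)]
  have hflip : (∏ k : Fin (2 * n), (x (j.succAbove k).succ - x j.succ)) =
      ∏ k : Fin (2 * n), (x j.succ - x (j.succAbove k).succ) := by
    have : ∀ k : Fin (2 * n), x (j.succAbove k).succ - x j.succ =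
      (-1) * (x j.succ - x (j.succAbove k).succ) := fun k => by ring
    simp only [this, Finset.prod_mul_distrib]
    simp
  have hp2 : (∏ k : Fin (2 * n), (x j.succ - x (j.succAbove k).succ)) ≠ 0 :=
    Finset.prod_ne_zero_iff.mpr fun k _ => sub_ne_zero.mpr
      fun e => Fin.succAbove_ne j k (hinj e).symm
  have hs := vprod_succAbove (fun k : Fin (2 * n + 1) => x k.succ) j
  rw [Polynomial.eval_mul, hPe, hQe, hc, hc, hw, hs, hflip]
  have h3 := sub_ne_zero.mpr (hne j)
  generalize (∏ k : Fin (2 * n), (x j.succ - x (j.succAbove k).succ)) = p at *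
  generalize (vprod fun k : Fin (2 * n) => x (j.succAbove k).succ) = v at *
  rw [pow_add]
  rcases neg_one_pow_eq_or F (j : ℕ) with e | e <;> rcases neg_one_pow_eq_or F n with e' | e' <;>
    rw [e, e'] <;> field_simp <;> ring

/-- Permutation sending `0` to `j`, and `k+1` to `j.succAbove (τ k)`. -/
def permIns {m : ℕ} (j : Fin (m + 1)) (τ : Equiv.Perm (Fin m)) : Equiv.Perm (Fin (m + 1)) :=
  Equiv.Perm.decomposeFin.symm (0, τ) |>.trans j.cycleRange.symm

theorem permIns_zero {m : ℕ} (j : Fin (m + 1)) (τ : Equiv.Perm (Fin m)) :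
    permIns j τ 0 = j := by
  simp [permIns]

theorem permIns_succ {m : ℕ} (j : Fin (m + 1)) (τ : Equiv.Perm (Fin m)) (k : Fin m) :
    permIns j τ k.succ = j.succAbove (τ k) := by
  simp [permIns]

theorem sign_permIns {m : ℕ} (j : Fin (m + 1)) (τ : Equiv.Perm (Fin m)) :
    Equiv.Perm.sign (permIns j τ) = (-1) ^ (j : ℕ) * Equiv.Perm.sign τ := by
  rw [permIns, Equiv.Perm.sign_trans, Equiv.Perm.sign_symm, Fin.sign_cycleRange,
    Equiv.Perm.decomposeFin.symm_sign]
  simp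

theorem permIns_surj {m : ℕ} (ρ : Equiv.Perm (Fin (m + 1))) :
    ∃ τ, permIns (ρ 0) τ = ρ := by
  obtain ⟨⟨p, τ⟩, h⟩ := Equiv.Perm.decomposeFin.symm.surjective (ρ.trans (ρ 0).cycleRange)
  have hp : p = 0 := by
    have := congrArg (fun e : Equiv.Perm (Fin (m + 1)) => e 0) h
    simpa using this
  subst hp
  refine ⟨τ, ?_⟩
  rw [permIns, h]
  ext k
  simp

theorem permIns_inj {m : ℕ} {j j' : Fin (m + 1)} {τ τ' : Equiv.Perm (Fin m)}
    (h : permIns j τ = permIns j' τ') : j = j' ∧ τ = τ' := by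
  have h0 : j = j' := by rw [← permIns_zero j τ, h, permIns_zero]
  subst h0
  refine ⟨rfl, Equiv.ext fun k => ?_⟩
  have : permIns j τ k.succ = permIns j τ' k.succ := by rw [h]
  rw [permIns_succ, permIns_succ] at this
  exact Fin.succAbove_right_injective this

/-- Insert the pair `(0, j+1)` into a matching. -/
def matIns {n : ℕ} (j : Fin (2 * n + 1)) (τ : Equiv.Perm (Fin (2 * n))) :
    Equiv.Perm (Fin (2 * (n + 1))) :=
  permIns (m := 2 * n + 1) 0 (permIns j τ)

theorem matIns_zero {n : ℕ} (j : Fin (2 * n + 1)) (τ : Equiv.Perm (Fin (2 * n)))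
    (h : 0 < 2 * (n + 1)) : matIns j τ ⟨0, h⟩ = (0 : Fin (2 * n + 1 + 1)) :=
  permIns_zero _ _

theorem matIns_one {n : ℕ} (j : Fin (2 * n + 1)) (τ : Equiv.Perm (Fin (2 * n)))
    (h : 1 < 2 * (n + 1)) : matIns j τ ⟨1, h⟩ = (j.succ : Fin (2 * n + 1 + 1)) := by
  have := permIns_succ (m := 2 * n + 1) 0 (permIns j τ) 0
  rw [permIns_zero, Fin.succAbove_zero] at this
  exact this

theorem matIns_add {n : ℕ} (j : Fin (2 * n + 1)) (τ : Equiv.Perm (Fin (2 * n)))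
    (k : ℕ) (hk : k < 2 * n) (h : k + 2 < 2 * (n + 1)) :
    matIns j τ ⟨k + 2, h⟩ = ((j.succAbove (τ ⟨k, hk⟩)).succ : Fin (2 * n + 1 + 1)) := by
  have := permIns_succ (m := 2 * n + 1) 0 (permIns j τ) (Fin.succ ⟨k, hk⟩)
  rw [Fin.succAbove_zero, permIns_succ j τ] at this
  exact this

theorem sign_matIns {n : ℕ} (j : Fin (2 * n + 1)) (τ : Equiv.Perm (Fin (2 * n))) :
    Equiv.Perm.sign (matIns j τ) = (-1) ^ (j : ℕ) * Equiv.Perm.sign τ := by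
  refine (sign_permIns (m := 2 * n + 1) 0 (permIns j τ)).trans ?_
  rw [sign_permIns]; simp

theorem matIns_add' {n : ℕ} (j : Fin (2 * n + 1)) (τ : Equiv.Perm (Fin (2 * n)))
    (i k : ℕ) (hk : k < 2 * n) (e : i = k + 2) (h : i < 2 * (n + 1)) :
    matIns j τ ⟨i, h⟩ = ((j.succAbove (τ ⟨k, hk⟩)).succ : Fin (2 * n + 1 + 1)) := by
  subst e
  exact matIns_add j τ k hk h

theorem matIns_mem {n : ℕ} (j : Fin (2 * n + 1)) (τ : Equiv.Perm (Fin (2 * n))) :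
    matIns j τ ∈ pfMatchings (n + 1) ↔ τ ∈ pfMatchings n := by
  have mono : ∀ u v : Fin (2 * n),
      ((j.succAbove u).succ : Fin (2 * n + 1 + 1)) < (j.succAbove v).succ ↔ u < v := by
    intro u v
    rw [Fin.succ_lt_succ_iff, Fin.succAbove_lt_succAbove_iff]
  have E : ∀ (i : Fin n) (h), matIns j τ ⟨2 * (i.succ : ℕ), h⟩ =
      ((j.succAbove (τ ⟨2 * i, by omega⟩)).succ : Fin (2 * n + 1 + 1)) := fun i h =>
    matIns_add' j τ _ _ _ (by simp; ring) h
  have O : ∀ (i : Fin n) (h), matIns j τ ⟨2 * (i.succ : ℕ) + 1, h⟩ =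
      ((j.succAbove (τ ⟨2 * i + 1, by omega⟩)).succ : Fin (2 * n + 1 + 1)) := fun i h =>
    matIns_add' j τ _ _ _ (by simp; ring) h
  have Z : ∀ h, matIns j τ ⟨2 * ((0 : Fin (n + 1)) : ℕ), h⟩ = (0 : Fin (2 * n + 1 + 1)) :=
    fun h => matIns_zero j τ h
  have Z1 : ∀ h, matIns j τ ⟨2 * ((0 : Fin (n + 1)) : ℕ) + 1, h⟩ = (j.succ : Fin (2 * n + 1 + 1)) :=
    fun h => matIns_one j τ h
  simp only [pfMatchings, Finset.mem_filter, Finset.mem_univ, true_and]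
  constructor
  · rintro ⟨h1, h2⟩
    refine ⟨fun i => ?_, fun i k hik => ?_⟩
    · have := h1 i.succ
      rw [E, O] at this
      exact (mono _ _).mp this
    · have := h2 i.succ k.succ (Fin.succ_lt_succ_iff.mpr hik)
      rw [E, E] at this
      exact (mono _ _).mp this
  · rintro ⟨h1, h2⟩
    refine ⟨fun i => ?_, fun i k hik => ?_⟩
    · refine Fin.cases ?_ (fun i => ?_) i
      · rw [Z, Z1]; exact Fin.succ_pos j
      · rw [E, O]; exact (mono _ _).mpr (h1 i)
    · revert hik
      refine Fin.cases ?_ (fun k => ?_) k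
      · intro h; exact absurd h (Fin.not_lt_zero _)
      · refine Fin.cases ?_ (fun i => ?_) i
        · intro _; rw [Z, E]; exact Fin.succ_pos _
        · intro h; rw [E, E]; exact (mono _ _).mpr (h2 i k (Fin.succ_lt_succ_iff.mp h))

theorem matching_zero {n : ℕ} (σ : Equiv.Perm (Fin (2 * (n + 1))))
    (hσ : σ ∈ pfMatchings (n + 1)) (h : 0 < 2 * (n + 1)) : σ ⟨0, h⟩ = ⟨0, h⟩ := by
  simp only [pfMatchings, Finset.mem_filter, Finset.mem_univ, true_and] at hσ
  obtain ⟨h1, h2⟩ := hσ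
  obtain ⟨⟨k, hk⟩, e⟩ := σ.surjective ⟨0, h⟩
  have hev : ∀ (i : ℕ) (hi : i < n + 1), σ ⟨2 * i, by omega⟩ = ⟨0, h⟩ → i = 0 := by
    intro i hi e
    by_contra hne
    have := h2 ⟨0, by omega⟩ ⟨i, hi⟩ (Fin.mk_lt_mk.mpr (by omega))
    rw [e] at this
    exact absurd this (by simp [Fin.lt_def])
  rcases Nat.even_or_odd' k with ⟨i, hi | hi⟩
  · subst hi
    have := hev i (by omega) e
    subst this
    exact e
  · subst hi
    have := h1 ⟨i, by omega⟩
    rw [e] at this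
    exact absurd this (by simp [Fin.lt_def])

theorem pf_expand {R : Type*} [CommRing R] {n : ℕ}
    (A : Matrix (Fin (2 * n + 1 + 1)) (Fin (2 * n + 1 + 1)) R) :
    pf (n := n + 1) A = ∑ j : Fin (2 * n + 1), (-1) ^ (j : ℕ) * A 0 j.succ *
      pf (n := n) (A.submatrix (fun k => (j.succAbove k).succ) (fun k => (j.succAbove k).succ)) := by
  simp only [pf, Finset.mul_sum]
  rw [← Finset.sum_product']
  symm
  refine Finset.sum_bij (fun p _ => matIns p.1 p.2) ?_ ?_ ?_ ?_
  · rintro ⟨j, τ⟩ h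
    exact (matIns_mem j τ).mpr (Finset.mem_product.mp h).2
  · rintro ⟨j, τ⟩ _ ⟨j', τ'⟩ _ h
    obtain ⟨h1, h2⟩ := permIns_inj (permIns_inj (m := 2 * n + 1) h).2
    exact Prod.ext h1 h2
  · intro σ hσ
    have h0 := matching_zero σ hσ (by omega)
    obtain ⟨ρ, hρ⟩ := permIns_surj (m := 2 * n + 1) σ
    obtain ⟨τ, hτ⟩ := permIns_surj ρ
    have e : matIns (ρ 0) τ = σ := by
      rw [← hρ, matIns, hτ]
      congr 1
      exact h0.symm
    refine ⟨(ρ 0, τ), ?_, e⟩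
    rw [Finset.mem_product]
    refine ⟨Finset.mem_univ _, ?_⟩
    rw [← matIns_mem (ρ 0), e]; exact hσ
  · rintro ⟨j, τ⟩ _
    simp only
    rw [sign_matIns, Fin.prod_univ_succ]
    have E : ∀ (i : Fin n) (h), matIns j τ ⟨2 * (i.succ : ℕ), h⟩ =
        ((j.succAbove (τ ⟨2 * i, by omega⟩)).succ : Fin (2 * n + 1 + 1)) := fun i h =>
      matIns_add' j τ _ _ _ (by simp; ring) h
    have O : ∀ (i : Fin n) (h), matIns j τ ⟨2 * (i.succ : ℕ) + 1, h⟩ =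
        ((j.succAbove (τ ⟨2 * i + 1, by omega⟩)).succ : Fin (2 * n + 1 + 1)) := fun i h =>
      matIns_add' j τ _ _ _ (by simp; ring) h
    have Z : ∀ h, matIns j τ ⟨2 * ((0 : Fin (n + 1)) : ℕ), h⟩ = (0 : Fin (2 * n + 1 + 1)) :=
      fun h => matIns_zero j τ h
    have Z1 : ∀ h, matIns j τ ⟨2 * ((0 : Fin (n + 1)) : ℕ) + 1, h⟩ = (j.succ : Fin (2 * n + 1 + 1)) :=
      fun h => matIns_one j τ h
    rw [Z, Z1]
    simp only [E, O, Matrix.submatrix_apply]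
    push_cast
    ring

theorem pf_eq_W {F : Type*} [Field F] (n : ℕ) : ∀ (x a c : Fin (2 * n) → F),
    Function.Injective x →
    pf (Matrix.of fun i j : Fin (2 * n) => (a i - a j) * (c i - c j) / (x i - x j)) =
      W n x a * W n x c / vprod x := by
  induction n with
  | zero =>
    intro x a c _
    have h1 : pfMatchings 0 = Finset.univ := by
      ext σ; simp [pfMatchings]
    have h2 : ∀ y : Fin (2 * 0) → F, W 0 x y = 1 := fun y => by
      haveI : IsEmpty (Fin (2 * 0)) := Fin.isEmpty
      exact Matrix.det_isEmpty
    have h3 : vprod x = 1 := by simp [vprod]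
    rw [h2, h2, h3, pf, h1]
    have hu : (Finset.univ : Finset (Equiv.Perm (Fin (2 * 0)))) = {1} := by
      ext σ; simpa using Subsingleton.elim σ 1
    rw [hu]
    simp
  | succ n ih =>
    intro x a c hx
    refine (pf_expand _).trans ?_
    refine Eq.trans ?_ (W_recursion n x a c hx).symm
    refine Finset.sum_congr rfl fun j _ => ?_
    have h := ih (fun k => x (j.succAbove k).succ) (fun k => a (j.succAbove k).succ)
      (fun k => c (j.succAbove k).succ)
      (hx.comp ((Fin.succ_injective _).comp (Fin.succAbove_right_injective (p := j))))
    exact congrArg (fun z => (-1) ^ (j : ℕ) *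
        ((a (0 : Fin (2 * n + 1 + 1)) - a j.succ) * (c (0 : Fin (2 * n + 1 + 1)) - c j.succ) /
          (x (0 : Fin (2 * n + 1 + 1)) - x j.succ)) * z) h

/-- `Pf[ (a_i − a_j)(c_i − c_j)/(x_i − x_j) ]
  = V^n(X,1;A,1) V^n(X,1;C,1) / Π_{i<j}(x_i − x_j)`. -/
theorem pf_eq_Vdet_special (F : Type*) [Field F] (n : ℕ) (hn : 1 ≤ n)
    (x a c : Fin (2 * n) → F) (hx : Function.Injective x) :
    pf (Matrix.of fun i j : Fin (2 * n) => (a i - a j) * (c i - c j) / (x i - x j)) =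
      Vdet n x 1 a 1 * Vdet n x 1 c 1 / ∏ i : Fin (2 * n), ∏ j ∈ Ioi i, (x i - x j) := by
  rw [Vdet_mul, pf_eq_W n x a c hx, vprod]
end

section
/- Let n ≥ 1 and let x_i, y_i, a_i, b_i, c_i, d_i (1≤i≤2n) be variables. Then Pf[ (a_i b_j − a_j b_i)(c_i d_j − c_j d_i)/(x_i y_j − x_j y_i) ]_{1≤i<j≤2n} = V^n(X,Y;A,B) · V^n(X,Y;C,D) / Π_{1≤i<j≤2n}(x_i y_j − x_j y_i). -/
open Finset

section
variable {R : Type*} [CommRing R] {n : ℕ}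

def pfBuild (k : Fin (2*n+1)) (τ : Equiv.Perm (Fin (2*n))) : Equiv.Perm (Fin (2*n+1+1)) :=
  Equiv.Perm.decomposeFin.symm (0, (Fin.cycleRange k).symm * Equiv.Perm.decomposeFin.symm (0, τ))

lemma pfBuild_zero (k : Fin (2*n+1)) (τ : Equiv.Perm (Fin (2*n))) : pfBuild k τ 0 = 0 := by
  simp [pfBuild]

lemma pfBuild_one (k : Fin (2*n+1)) (τ : Equiv.Perm (Fin (2*n))) :
    pfBuild k τ (Fin.succ 0) = k.succ := by
  simp [pfBuild, Equiv.Perm.decomposeFin_symm_apply_succ, -Fin.succ_zero_eq_one, -Fin.succ_zero_eq_one']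

lemma pfBuild_succ (k : Fin (2*n+1)) (τ : Equiv.Perm (Fin (2*n))) (l : Fin (2*n)) :
    pfBuild k τ l.succ.succ = (k.succAbove (τ l)).succ := by
  simp [pfBuild, Equiv.Perm.decomposeFin_symm_apply_succ]

lemma pfBuild_sign (k : Fin (2*n+1)) (τ : Equiv.Perm (Fin (2*n))) :
    Equiv.Perm.sign (pfBuild k τ) = (-1) ^ (k : ℕ) * Equiv.Perm.sign τ := by
  simp [pfBuild, Equiv.Perm.decomposeFin.symm_sign, Fin.sign_cycleRange]

lemma pfBuild_mem (k : Fin (2*n+1)) (τ : Equiv.Perm (Fin (2*n))) :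
    (pfBuild k τ ∈ pfMatchings (n+1)) ↔ τ ∈ pfMatchings n := by
  have key : ∀ (l : ℕ) (h : l < 2 * n) (h' : l + 2 < 2 * n + 1 + 1),
      pfBuild k τ ⟨l + 2, h'⟩ = (k.succAbove (τ ⟨l, h⟩)).succ := fun l h h' =>
    pfBuild_succ k τ ⟨l, h⟩
  have h0 := pfBuild_zero k τ
  have h1 := pfBuild_one k τ
  simp only [pfMatchings, Finset.mem_filter, Finset.mem_univ, true_and]
  constructor
  · rintro ⟨hA, hB⟩
    constructor
    · intro i
      have h := hA i.succ
      have e1 := key (2 * i.1) (by omega) (by omega)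
      have e2 := key (2 * i.1 + 1) (by omega) (by omega)
      have h : pfBuild k τ ⟨2 * i.1 + 2, by omega⟩ < pfBuild k τ ⟨2 * i.1 + 1 + 2, by omega⟩ := h
      rw [e1, e2] at h
      simpa [Fin.succAbove_lt_succAbove_iff] using h
    · intro i j hij
      have h := hB i.succ j.succ (by simpa using hij)
      have e1 := key (2 * i.1) (by omega) (by omega)
      have e2 := key (2 * j.1) (by omega) (by omega)
      have h : pfBuild k τ ⟨2 * i.1 + 2, by omega⟩ < pfBuild k τ ⟨2 * j.1 + 2, by omega⟩ := h
      rw [e1, e2] at h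
      simpa [Fin.succAbove_lt_succAbove_iff] using h
  · rintro ⟨hA, hB⟩
    constructor
    · intro i
      refine Fin.cases ?_ (fun i => ?_) i
      · change pfBuild k τ 0 < pfBuild k τ (Fin.succ 0)
        rw [h0, h1]; exact Fin.succ_pos k
      · have h := hA i
        have e1 := key (2 * i.1) (by omega) (by omega)
        have e2 := key (2 * i.1 + 1) (by omega) (by omega)
        change pfBuild k τ ⟨2 * i.1 + 2, by omega⟩ < pfBuild k τ ⟨2 * i.1 + 1 + 2, by omega⟩
        rw [e1, e2]
        simpa [Fin.succAbove_lt_succAbove_iff] using h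
    · intro i j
      refine Fin.cases ?_ (fun j => ?_) j
      · intro h; simp at h
      refine Fin.cases ?_ (fun i => ?_) i
      · intro _
        change pfBuild k τ 0 < pfBuild k τ ⟨2 * j.1 + 2, by omega⟩
        rw [h0, key _ (by omega)]
        exact Fin.succ_pos _
      · intro hij
        have h := hB i j (by simpa using hij)
        have e1 := key (2 * i.1) (by omega) (by omega)
        have e2 := key (2 * j.1) (by omega) (by omega)
        change pfBuild k τ ⟨2 * i.1 + 2, by omega⟩ < pfBuild k τ ⟨2 * j.1 + 2, by omega⟩
        rw [e1, e2]
        simpa [Fin.succAbove_lt_succAbove_iff] using h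

lemma pfBuild_surj (σ : Equiv.Perm (Fin (2*n+1+1))) (h : σ ∈ pfMatchings (n+1)) :
    ∃ k τ, pfBuild k τ = σ := by
  have h0 : σ 0 = 0 := by
    simp only [pfMatchings, Finset.mem_filter, Finset.mem_univ, true_and] at h
    obtain ⟨hA, hB⟩ := h
    have hE : ∀ i : Fin (n+1), σ 0 ≤ σ ⟨2 * i.1, by omega⟩ := by
      intro i
      rcases Nat.eq_zero_or_pos i.1 with hi | hi
      · have : (⟨2 * i.1, by omega⟩ : Fin (2*n+1+1)) = 0 := by ext; simp [hi]
        rw [this]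
      · exact (hB 0 i hi).le
    obtain ⟨p, hp⟩ := σ.surjective 0
    have hle : σ 0 ≤ σ p := by
      rcases Nat.even_or_odd' p.1 with ⟨i, hi | hi⟩
      · have := hE ⟨i, by omega⟩
        convert this using 2
        first | exact hi | (ext; exact hi)
      · refine (hE ⟨i, by omega⟩).trans ?_
        have hp' : p = ⟨2 * i + 1, by omega⟩ := Fin.ext hi
        exact (hA ⟨i, by omega⟩).le.trans_eq (congrArg σ hp'.symm)
    rw [hp] at hle
    exact Fin.le_zero_iff.mp hle
  obtain ⟨⟨p, e⟩, rfl⟩ := Equiv.Perm.decomposeFin.symm.surjective σ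
  have hp : p = 0 := by simpa using h0
  subst hp
  obtain ⟨⟨q, τ⟩, hq⟩ := Equiv.Perm.decomposeFin.symm.surjective (Fin.cycleRange (e 0) * e)
  have hq0 : q = 0 := by
    have := congrArg (fun f => f 0) hq
    simpa using this
  subst hq0
  refine ⟨e 0, τ, ?_⟩
  rw [pfBuild, hq]
  congr 2
  ext; simp

lemma pf_succ (A : Matrix (Fin (2*n+1+1)) (Fin (2*n+1+1)) R) :
    pf (n := n+1) A = ∑ k : Fin (2*n+1), (-1) ^ (k : ℕ) * A 0 k.succ *
      pf (n := n) (A.submatrix (fun l => (k.succAbove l).succ) (fun l => (k.succAbove l).succ)) := by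
  unfold pf
  simp_rw [Finset.mul_sum]
  rw [← Finset.sum_product']
  symm
  refine Finset.sum_bij (fun p _ => pfBuild p.1 p.2) ?_ ?_ ?_ ?_
  · rintro ⟨k, τ⟩ h
    rw [pfBuild_mem]; simpa using h
  · rintro ⟨k, τ⟩ h ⟨k', τ'⟩ h' heq
    simp only at heq
    have hk : k = k' := by
      have := congrArg (fun f => f (Fin.succ 0)) heq
      simp only [pfBuild_one] at this
      exact Fin.succ_injective _ this
    subst hk
    congr 1
    ext l
    have := congrArg (fun f => f l.succ.succ) heq
    simp only [pfBuild_succ] at this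
    rw [Fin.succAbove_right_injective (Fin.succ_injective _ this)]
  · intro σ h
    obtain ⟨k, τ, rfl⟩ := pfBuild_surj σ h
    exact ⟨(k, τ), by simpa using (pfBuild_mem k τ).1 h, rfl⟩
  · rintro ⟨k, τ⟩ h
    rw [Fin.prod_univ_succ, pfBuild_sign]
    have e : A (pfBuild k τ 0) (pfBuild k τ (Fin.succ 0)) = A 0 k.succ := by
      rw [pfBuild_zero, pfBuild_one]
    have e2 : ∀ i : Fin n, A (pfBuild k τ (Fin.succ (Fin.succ ⟨2 * i.1, by omega⟩)))
        (pfBuild k τ (Fin.succ (Fin.succ ⟨2 * i.1 + 1, by omega⟩))) =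
        A (k.succAbove (τ ⟨2 * i.1, by omega⟩)).succ (k.succAbove (τ ⟨2 * i.1 + 1, by omega⟩)).succ := by
      intro i; rw [pfBuild_succ, pfBuild_succ]
    have e3 := Finset.prod_congr (s₁ := Finset.univ) rfl (fun i _ => e2 i)
    refine Eq.trans ?_ (congrArg₂ (fun u v => (((((-1) ^ (k : ℕ) * Equiv.Perm.sign τ : ℤˣ)) : ℤ) : R) * (u * v)) e.symm e3.symm)
    simp only [Matrix.submatrix_apply]
    push_cast
    ring
end
section

/-- The product of all `x_i y_j - x_j y_i` with `i < j`. -/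
def Dprod {R : Type*} [CommRing R] {m : ℕ} (x y : Fin m → R) : R :=
  ∏ i : Fin m, ∏ j ∈ Ioi i, (x i * y j - x j * y i)

lemma Dprod_eq_det {R : Type*} [CommRing R] {m : ℕ} (x y : Fin m → R) :
    Dprod x y = (Matrix.projVandermonde y x).det := by
  rw [Matrix.det_projVandermonde, Dprod]
  refine Finset.prod_congr rfl fun i _ => Finset.prod_congr rfl fun j _ => ?_
  ring

lemma Dprod_succ {R : Type*} [CommRing R] {m : ℕ} (x y : Fin (m+1) → R) :
    Dprod x y = (∏ k : Fin m, (x 0 * y k.succ - x k.succ * y 0)) *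
      Dprod (fun k => x k.succ) (fun k => y k.succ) := by
  simp only [Dprod]
  rw [Fin.prod_univ_succ]
  simp only [Fin.prod_Ioi_zero, Fin.prod_Ioi_succ]

lemma Dprod_perm {R : Type*} [CommRing R] {m : ℕ} (x y : Fin m → R) (σ : Equiv.Perm (Fin m)) :
    Dprod (fun i => x (σ i)) (fun i => y (σ i)) = ((Equiv.Perm.sign σ : ℤ) : R) * Dprod x y := by
  rw [Dprod_eq_det, Dprod_eq_det, ← Matrix.det_permute]
  congr 1

lemma Dprod_succAbove {R : Type*} [CommRing R] {m : ℕ} (x y : Fin (m+1) → R) (k : Fin (m+1)) :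
    Dprod x y = (-1) ^ (k : ℕ) *
      (∏ l : Fin m, (x k * y (k.succAbove l) - x (k.succAbove l) * y k)) *
      Dprod (fun l => x (k.succAbove l)) (fun l => y (k.succAbove l)) := by
  have h := Dprod_perm x y (Fin.cycleRange k).symm
  rw [Dprod_succ] at h
  simp only [Fin.cycleRange_symm_zero, Fin.cycleRange_symm_succ, Equiv.Perm.sign_symm,
    Fin.sign_cycleRange] at h
  rw [mul_assoc, h]
  push_cast
  rw [← mul_assoc, ← mul_pow]
  simp

lemma Dprod_ne_zero {F : Type*} [Field F] {m : ℕ} (x y : Fin m → F)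
    (h : ∀ i j, i ≠ j → x i * y j - x j * y i ≠ 0) : Dprod x y ≠ 0 := by
  refine Finset.prod_ne_zero_iff.2 fun i _ => Finset.prod_ne_zero_iff.2 fun j hj => h i j ?_
  exact (Finset.mem_Ioi.1 hj).ne

/-- Functions of two variables given by binary forms of degree `d`. -/
def Hform (F : Type*) [Field F] (d : ℕ) : Submodule F (F × F → F) :=
  Submodule.span F (Set.range fun m : Fin (d+1) => fun p : F × F => p.2 ^ (m : ℕ) * p.1 ^ (m.rev : ℕ))

lemma Hform_monomial {F : Type*} [Field F] (d i j : ℕ) (h : i + j = d) :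
    (fun p : F × F => p.1 ^ i * p.2 ^ j) ∈ Hform F d := by
  refine Submodule.subset_span ⟨⟨j, by omega⟩, ?_⟩
  funext p
  simp only [Fin.val_rev]
  rw [mul_comm]
  congr 2
  omega

lemma Hform_mul {F : Type*} [Field F] (d e : ℕ) {f g : F × F → F} (hf : f ∈ Hform F d)
    (hg : g ∈ Hform F e) : f * g ∈ Hform F (d + e) := by
  have h := Submodule.mul_mem_mul hf hg
  rw [Hform, Hform, Submodule.span_mul_span] at h
  refine Submodule.span_le.2 ?_ h
  rintro _ ⟨_, ⟨i, rfl⟩, _, ⟨j, rfl⟩, rfl⟩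
  have := Hform_monomial (F := F) (d + e) (i.rev + j.rev) (i + j)
    (by simp only [Fin.val_rev]; omega)
  rw [SetLike.mem_coe]
  convert this using 1
  funext p
  simp only [Pi.mul_apply]
  ring

lemma Hform_const {F : Type*} [Field F] (d : ℕ) {f : F × F → F} (hf : f ∈ Hform F d) (c : F) :
    (fun p => c * f p) ∈ Hform F d := Submodule.smul_mem _ c hf

lemma Hform_prod {F : Type*} [Field F] (m : ℕ) (u v : Fin m → F) :
    (fun p : F × F => ∏ l, (p.1 * v l - u l * p.2)) ∈ Hform F m := by
  induction m with
  | zero => simpa using Hform_monomial (F := F) 0 0 0 rfl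
  | succ m ih =>
    simp only [Fin.prod_univ_castSucc]
    refine Hform_mul m 1 (ih _ _) ?_
    have h1 := Hform_const 1 (Hform_monomial (F := F) 1 1 0 rfl) (v (Fin.last m))
    have h2 := Hform_const 1 (Hform_monomial (F := F) 1 0 1 rfl) (u (Fin.last m))
    convert Submodule.sub_mem _ h1 h2 using 1
    funext p
    simp only [Pi.sub_apply]
    ring

lemma Hform_eq_zero {F : Type*} [Field F] (d : ℕ) {f : F × F → F} (hf : f ∈ Hform F d)
    (x y : Fin (d+1) → F) (h : ∀ i j, i ≠ j → x i * y j - x j * y i ≠ 0)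
    (h0 : ∀ i, f (x i, y i) = 0) : f = 0 := by
  obtain ⟨c, rfl⟩ := (Submodule.mem_span_range_iff_exists_fun F).1 hf
  have hD := Dprod_ne_zero x y h
  rw [Dprod_eq_det] at hD
  have : c = 0 := by
    refine Matrix.eq_zero_of_mulVec_eq_zero hD ?_
    funext i
    have := h0 i
    simp only [Finset.sum_apply, Pi.smul_apply, smul_eq_mul] at this
    simp only [Matrix.mulVec, dotProduct, Matrix.projVandermonde_apply, Pi.zero_apply]
    rw [← this]
    exact Finset.sum_congr rfl fun m _ => mul_comm _ _
  subst this
  simp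

/-- Reindexing rows and columns independently changes the determinant by a sign. -/
lemma det_submatrix_sign {R : Type*} [CommRing R] {α β : Type*} [Fintype α] [Fintype β]
    [DecidableEq α] [DecidableEq β] (e₁ e₂ : α ≃ β) :
    ∃ ε : R, ε * ε = 1 ∧ ∀ M : Matrix β β R, M.det = ε * (M.submatrix e₁ e₂).det := by
  refine ⟨((Equiv.Perm.sign (e₁.symm.trans e₂) : ℤ) : R), ?_, fun M => ?_⟩
  · rcases Int.units_eq_one_or (Equiv.Perm.sign (e₁.symm.trans e₂)) with h | h <;> simp [h]
  · have : M.submatrix e₁ e₂ = (M.submatrix id (e₁.symm.trans e₂)).submatrix e₁ e₁ := by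
      ext i j; simp
    rw [this, Matrix.det_submatrix_equiv_self, Matrix.det_permute', ← mul_assoc]
    rcases Int.units_eq_one_or (Equiv.Perm.sign (e₁.symm.trans e₂)) with h | h <;> simp [h]

end
section

variable {F : Type*} [Field F] {n : ℕ}

/-- Rows `0`, `k+1` first, then the others. -/
def rowFun (k : Fin (2*n+1)) : Fin 2 ⊕ Fin (2*n) → Fin (2*n+1+1) :=
  Sum.elim ![0, k.succ] (fun l => (k.succAbove l).succ)

lemma rowFun_inj (k : Fin (2*n+1)) : Function.Injective (rowFun k) := by
  rintro (i | i) (j | j) h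
  · fin_cases i <;> fin_cases j <;> simp_all [rowFun, Fin.succ_ne_zero, (Fin.succ_ne_zero _).symm]
  · exfalso
    fin_cases i
    · exact Fin.succ_ne_zero _ h.symm
    · exact Fin.succAbove_ne k j (Fin.succ_injective _ h).symm
  · exfalso
    fin_cases j
    · exact Fin.succ_ne_zero _ h
    · exact Fin.succAbove_ne k i (Fin.succ_injective _ h)
  · have h : (k.succAbove i).succ = (k.succAbove j).succ := h
    rw [Fin.succAbove_right_injective (Fin.succ_injective _ h)]

lemma bij_of_inj (f : Fin 2 ⊕ Fin (2*n) → Fin (2*n+1+1)) (h : Function.Injective f) :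
    Function.Bijective f := by
  rw [Fintype.bijective_iff_injective_and_card]
  refine ⟨h, ?_⟩
  simp
  omega

/-- The columns `0`, `n+1` first, then the others. -/
def colFun₁ : Fin 2 ⊕ Fin (2*n) → Fin (2*n+1+1) :=
  Sum.elim ![⟨0, by omega⟩, ⟨n+1, by omega⟩]
    (fun l => if h : l.1 < n then ⟨l.1 + 1, by omega⟩ else ⟨l.1 + 2, by omega⟩)

/-- The columns `n`, `2n+1` first, then the others. -/
def colFun₂ : Fin 2 ⊕ Fin (2*n) → Fin (2*n+1+1) :=
  Sum.elim ![⟨n, by omega⟩, ⟨2*n+1, by omega⟩]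
    (fun l => if h : l.1 < n then ⟨l.1, by omega⟩ else ⟨l.1 + 1, by omega⟩)

lemma colFun₁_inj : Function.Injective (colFun₁ (n := n)) := by
  rintro (i | i) (j | j) h
  · fin_cases i <;> fin_cases j <;> simp_all [colFun₁]
  · exfalso
    fin_cases i <;> simp only [colFun₁, Sum.elim_inl, Sum.elim_inr] at h <;> split_ifs at h <;>
      simp at h <;> omega
  · exfalso
    fin_cases j <;> simp only [colFun₁, Sum.elim_inl, Sum.elim_inr] at h <;> split_ifs at h <;>
      simp at h <;> omega
  · congr 1
    ext
    simp only [colFun₁, Sum.elim_inr] at h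
    split_ifs at h <;> simp at h <;> omega

lemma colFun₂_inj : Function.Injective (colFun₂ (n := n)) := by
  rintro (i | i) (j | j) h
  · fin_cases i <;> fin_cases j <;> simp_all [colFun₂] <;> omega
  · exfalso
    fin_cases i <;> simp only [colFun₂, Sum.elim_inl, Sum.elim_inr] at h <;> split_ifs at h <;>
      simp at h <;> omega
  · exfalso
    fin_cases j <;> simp only [colFun₂, Sum.elim_inl, Sum.elim_inr] at h <;> split_ifs at h <;>
      simp at h <;> omega
  · congr 1
    ext
    simp only [colFun₂, Sum.elim_inr] at h
    split_ifs at h <;> simp at h <;> omega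

lemma det_block (k : Fin (2*n+1)) (cf : Fin 2 ⊕ Fin (2*n) → Fin (2*n+1+1))
    (hcf : Function.Injective cf) :
    ∃ ε : F, ε * ε = 1 ∧ ∀ (B : Matrix (Fin (2*n+1+1)) (Fin (2*n+1+1)) F)
      (N : Matrix (Fin (2*n)) (Fin (2*n)) F) (w : Fin (2*n) → F),
      (∀ j, B 0 (cf (Sum.inr j)) = 0) → (∀ j, B k.succ (cf (Sum.inr j)) = 0) →
      (∀ l j, B (k.succAbove l).succ (cf (Sum.inr j)) = w l * N l j) →
      B.det = ε * ((B 0 (cf (Sum.inl 0)) * B k.succ (cf (Sum.inl 1)) -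
        B 0 (cf (Sum.inl 1)) * B k.succ (cf (Sum.inl 0))) * ((∏ l, w l) * N.det)) := by
  obtain ⟨ε, h1, h2⟩ := det_submatrix_sign (R := F)
    (Equiv.ofBijective _ (bij_of_inj _ (rowFun_inj k))) (Equiv.ofBijective _ (bij_of_inj _ hcf))
  refine ⟨ε, h1, fun B N w hB0 hBk hBl => ?_⟩
  rw [h2 B]
  congr 1
  set S := B.submatrix (Equiv.ofBijective _ (bij_of_inj _ (rowFun_inj k)))
    (Equiv.ofBijective _ (bij_of_inj _ hcf)) with hS
  have h12 : S.toBlocks₁₂ = 0 := by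
    ext i j
    fin_cases i
    · exact hB0 j
    · exact hBk j
  have h22 : S.toBlocks₂₂ = Matrix.of fun i j => w i * N i j := by
    ext i j
    exact hBl i j
  rw [← Matrix.fromBlocks_toBlocks S, h12, Matrix.det_fromBlocks_zero₁₂, h22,
    Matrix.det_mul_column, Matrix.det_fin_two]
  rfl

/-- entries of the matrix of `Vdet (n+1)` -/
def ment (n : ℕ) (x y a b : F) (j : ℕ) : F :=
  if j < n + 1 then a * x ^ (n - j) * y ^ j
    else b * x ^ (2 * n + 1 - j) * y ^ (j - (n + 1))

lemma Vdet_succ_eq (x y a b : Fin (2*n+1+1) → F) :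
    Vdet (n+1) x y a b = Matrix.det (Matrix.of fun i j : Fin (2*n+1+1) =>
      ment n (x i) (y i) (a i) (b i) j) := by
  rfl

lemma Vdet_coll (x y : Fin (2*n+1+1) → F) (k : Fin (2*n+1)) (hx : x 0 = x k.succ)
    (hy : y 0 = y k.succ) (hne : x 0 ≠ 0 ∨ y 0 ≠ 0) :
    ∃ ε : F, ε * ε = 1 ∧ ∀ a b : Fin (2*n+1+1) → F, Vdet (n+1) x y a b =
      ε * ((a 0 * b k.succ - a k.succ * b 0) *
        ((∏ l : Fin (2*n), (x k.succ * y (k.succAbove l).succ - x (k.succAbove l).succ * y k.succ)) *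
        Vdet n (fun l => x (k.succAbove l).succ) (fun l => y (k.succAbove l).succ)
          (fun l => a (k.succAbove l).succ) (fun l => b (k.succAbove l).succ))) := by
  by_cases hx0 : x 0 = 0
  · have hy0 : y 0 ≠ 0 := by tauto
    obtain ⟨ε, h1, h2⟩ := det_block (F := F) k colFun₂ colFun₂_inj
    refine ⟨ε, h1, fun a b => ?_⟩
    have hz : ∀ (i : Fin (2*n+1+1)) (j : Fin (2*n)), x i = 0 →
        ment n (x i) (y i) (a i) (b i) (colFun₂ (Sum.inr j)) = 0 := by
      intro i j hi
      have := j.2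
      rw [hi]
      simp only [colFun₂, Sum.elim_inr]
      split_ifs with h
      · simp only [ment]
        rw [if_pos (by omega), zero_pow (by omega)]; ring
      · simp only [ment]
        rw [if_neg (by omega), zero_pow (by omega)]; ring
    rw [Vdet_succ_eq, h2 _ (Matrix.of fun i j : Fin (2 * n) =>
      if (j : ℕ) < n then a (k.succAbove i).succ * x (k.succAbove i).succ ^ (n - 1 - (j : ℕ)) * y (k.succAbove i).succ ^ (j : ℕ)
      else b (k.succAbove i).succ * x (k.succAbove i).succ ^ (2 * n - 1 - (j : ℕ)) * y (k.succAbove i).succ ^ ((j : ℕ) - n))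
      (fun l => x (k.succAbove l).succ) (fun j => hz _ j hx0) (fun j => hz _ j (hx ▸ hx0))]
    · change ε * (_ * (_ * Vdet n _ _ _ _)) = _
      rw [← hx, ← hy, hx0]
      have hp : ∏ l : Fin (2*n), (0 * y (k.succAbove l).succ - x (k.succAbove l).succ * y 0) =
          (∏ l : Fin (2*n), x (k.succAbove l).succ) * (y 0 ^ n * y 0 ^ n) := by
        rw [← pow_add, ← two_mul]
        have : ∀ l : Fin (2*n), (0 * y (k.succAbove l).succ - x (k.succAbove l).succ * y 0) =
          x (k.succAbove l).succ * (- y 0) := fun l => by ring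
        simp_rw [this]
        rw [Finset.prod_mul_distrib, Finset.prod_const, Finset.card_univ, Fintype.card_fin,
          Even.neg_pow (even_two_mul n)]
      rw [hp]
      have e1 : ∀ i, x i = 0 → y i = y 0 → ment n (x i) (y i) (a i) (b i) n = a i * y 0 ^ n := by
        intro i h h'
        simp [ment, h, h']
      have e2 : ∀ i, x i = 0 → y i = y 0 → ment n (x i) (y i) (a i) (b i) (2*n+1) = b i * y 0 ^ n := by
        intro i h h'
        simp only [ment, h, h']
        rw [if_neg (by omega), Nat.sub_self, show 2 * n + 1 - (n+1) = n by omega]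
        ring
      have f1 := e1 0 hx0 rfl
      have f2 := e1 k.succ (hx ▸ hx0) hy.symm
      have f3 := e2 0 hx0 rfl
      have f4 := e2 k.succ (hx ▸ hx0) hy.symm
      simp only [Matrix.of_apply, colFun₂, Sum.elim_inl, Matrix.cons_val_zero, Matrix.cons_val_one]
      rw [f1, f2, f3, f4]
      ring
    · intro l j
      have := j.2
      simp only [Matrix.of_apply, colFun₂, Sum.elim_inr]
      split_ifs with h
      · simp only [ment]
        rw [if_pos (by omega), show n - j.1 = n - 1 - j.1 + 1 by omega]; ring
      · simp only [ment]
        rw [if_neg (by omega), show 2 * n + 1 - (j.1 + 1) = 2 * n - 1 - j.1 + 1 by omega,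
          show j.1 + 1 - (n + 1) = j.1 - n by omega]; ring
  · obtain ⟨ε, h1, h2⟩ := det_block (F := F) k colFun₁ colFun₁_inj
    refine ⟨ε, h1, fun a b => ?_⟩
    set t := y 0 / x 0 with ht
    have hyt : y 0 = t * x 0 := by rw [ht]; field_simp
    let bent : Fin (2*n+1+1) → ℕ → F := fun i j =>
      if j = 0 ∨ j = n + 1 then ment n (x i) (y i) (a i) (b i) j
      else ment n (x i) (y i) (a i) (b i) j - t * ment n (x i) (y i) (a i) (b i) (j - 1)
    have hdet : Vdet (n+1) x y a b = Matrix.det (Matrix.of fun i j : Fin (2*n+1+1) => bent i j) := by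
      rw [Vdet_succ_eq]
      refine Matrix.det_eq_of_forall_col_eq_smul_add_pred
        (fun j => if j.1 = n then 0 else t) ?_ ?_
      · intro i
        simp [bent]
      · intro i j
        simp only [Matrix.of_apply, bent, Fin.val_succ, Fin.val_castSucc]
        by_cases hj : j.1 = n
        · simp [hj]
        · simp [hj]
    have hb : ∀ (i : Fin (2*n+1+1)) (j : Fin (2*n)), bent i (colFun₁ (Sum.inr j)) =
        (y i - t * x i) *
          (if (j : ℕ) < n then a i * x i ^ (n - 1 - (j : ℕ)) * y i ^ (j : ℕ)
            else b i * x i ^ (2 * n - 1 - (j : ℕ)) * y i ^ ((j : ℕ) - n)) := by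
      intro i j
      have := j.2
      simp only [colFun₁, Sum.elim_inr, bent]
      split_ifs with h1 h2 h2
      · simp at h2; omega
      · simp only [ment]
        rw [if_pos (by omega), if_pos (by omega), show j.1 + 1 - 1 = j.1 by omega,
          show n - j.1 = n - 1 - j.1 + 1 by omega, show n - (j.1 + 1) = n - 1 - j.1 by omega]
        ring
      · simp at h2; omega
      · simp only [ment]
        rw [if_neg (by omega), if_neg (by omega), show j.1 + 2 - 1 = j.1 + 1 by omega,
          show 2 * n + 1 - (j.1 + 1) = 2 * n - 1 - j.1 + 1 by omega,
          show 2 * n + 1 - (j.1 + 2) = 2 * n - 1 - j.1 by omega,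
          show j.1 + 2 - (n + 1) = j.1 - n + 1 by omega,
          show j.1 + 1 - (n + 1) = j.1 - n by omega]
        ring
    rw [hdet, h2 _ (Matrix.of fun i j : Fin (2 * n) =>
      if (j : ℕ) < n then a (k.succAbove i).succ * x (k.succAbove i).succ ^ (n - 1 - (j : ℕ)) * y (k.succAbove i).succ ^ (j : ℕ)
      else b (k.succAbove i).succ * x (k.succAbove i).succ ^ (2 * n - 1 - (j : ℕ)) * y (k.succAbove i).succ ^ ((j : ℕ) - n))
      (fun l => y (k.succAbove l).succ - t * x (k.succAbove l).succ)]
    · change ε * (_ * (_ * Vdet n _ _ _ _)) = _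
      rw [← hx, ← hy]
      have hp : ∏ l : Fin (2*n), (x 0 * y (k.succAbove l).succ - x (k.succAbove l).succ * y 0) =
          (∏ l : Fin (2*n), (y (k.succAbove l).succ - t * x (k.succAbove l).succ)) *
            (x 0 ^ n * x 0 ^ n) := by
        rw [← pow_add, ← two_mul]
        have : ∀ l : Fin (2*n), (x 0 * y (k.succAbove l).succ - x (k.succAbove l).succ * y 0) =
          (y (k.succAbove l).succ - t * x (k.succAbove l).succ) * x 0 := fun l => by
            rw [hyt]; ring
        simp_rw [this]
        rw [Finset.prod_mul_distrib, Finset.prod_const, Finset.card_univ, Fintype.card_fin]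
      rw [hp]
      have e1 : ∀ i, x i = x 0 → bent i 0 = a i * x 0 ^ n := by
        intro i h
        simp [bent, ment, h]
      have e2 : ∀ i, x i = x 0 → bent i (n+1) = b i * x 0 ^ n := by
        intro i h
        simp only [bent, ment, h]
        rw [if_pos (by simp), if_neg (by omega), Nat.sub_self,
          show 2 * n + 1 - (n+1) = n by omega]
        ring
      have f1 := e1 0 rfl
      have f2 := e1 k.succ hx.symm
      have f3 := e2 0 rfl
      have f4 := e2 k.succ hx.symm
      simp only [Matrix.of_apply, colFun₁, Sum.elim_inl, Matrix.cons_val_zero, Matrix.cons_val_one]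
      rw [f1, f2, f3, f4]
      ring
    · intro j
      rw [Matrix.of_apply, hb, hyt]; ring
    · intro j
      rw [Matrix.of_apply, hb, ← hx, ← hy, hyt]; ring
    · intro l j
      rw [Matrix.of_apply, hb, Matrix.of_apply]

end
section

variable {F : Type*} [Field F] {n : ℕ}

lemma Vdet_Hform (x y : Fin (2*n+1) → F) (a b : Fin (2*n+1+1) → F) :
    (fun p : F × F => Vdet (n+1) (Fin.cons p.1 x : Fin (2*n+1+1) → F)
      (Fin.cons p.2 y : Fin (2*n+1+1) → F) a b) ∈ Hform F n := by
  have h : ∀ p : F × F, Vdet (n+1) (Fin.cons p.1 x : Fin (2*n+1+1) → F)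
      (Fin.cons p.2 y : Fin (2*n+1+1) → F) a b =
      ∑ j : Fin (2*n+1+1), ((-1) ^ (j : ℕ) * Matrix.det (Matrix.of fun (i j' : Fin (2*n+1)) =>
        ment n (x i) (y i) (a i.succ) (b i.succ) (j.succAbove j'))) *
          ment n p.1 p.2 (a 0) (b 0) j := by
    intro p
    rw [Vdet_succ_eq, Matrix.det_succ_row_zero]
    refine Finset.sum_congr rfl fun j _ => ?_
    rw [mul_right_comm]
    rfl
  simp_rw [h]
  have := Submodule.sum_mem (Hform F n) (t := Finset.univ) (f := fun (j : Fin (2*n+1+1)) (p : F × F) =>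
    ((-1) ^ (j : ℕ) * Matrix.det (Matrix.of fun (i j' : Fin (2*n+1)) =>
        ment n (x i) (y i) (a i.succ) (b i.succ) (j.succAbove j'))) *
          ment n p.1 p.2 (a 0) (b 0) j) ?_
  · convert this using 1
    funext p
    simp
  · intro j _
    have hj := j.2
    refine Hform_const n (f := fun p : F × F => ment n p.1 p.2 (a 0) (b 0) j) ?_ _
    simp only [ment]
    split_ifs with h
    · simp only [mul_assoc]
      exact Hform_const n (Hform_monomial n _ _ (by omega)) _
    · simp only [mul_assoc]
      exact Hform_const n (Hform_monomial n _ _ (by omega)) _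

lemma Vdet_mul_expand (x y a b c d : Fin (2*n+1+1) → F)
    (hxy : ∀ i j, i ≠ j → x i * y j - x j * y i ≠ 0) :
    Vdet (n+1) x y a b * Vdet (n+1) x y c d =
      ∑ k : Fin (2*n+1), ((a 0 * b k.succ - a k.succ * b 0) * (c 0 * d k.succ - c k.succ * d 0) *
        ((∏ l : Fin (2*n), (x k.succ * y (k.succAbove l).succ - x (k.succAbove l).succ * y k.succ)) *
        (Vdet n (fun l => x (k.succAbove l).succ) (fun l => y (k.succAbove l).succ)
          (fun l => a (k.succAbove l).succ) (fun l => b (k.succAbove l).succ) *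
        Vdet n (fun l => x (k.succAbove l).succ) (fun l => y (k.succAbove l).succ)
          (fun l => c (k.succAbove l).succ) (fun l => d (k.succAbove l).succ)))) *
        (∏ l : Fin (2*n), (x 0 * y (k.succAbove l).succ - x (k.succAbove l).succ * y 0)) := by
  set C : Fin (2*n+1) → F := fun k =>
    ((a 0 * b k.succ - a k.succ * b 0) * (c 0 * d k.succ - c k.succ * d 0) *
        ((∏ l : Fin (2*n), (x k.succ * y (k.succAbove l).succ - x (k.succAbove l).succ * y k.succ)) *
        (Vdet n (fun l => x (k.succAbove l).succ) (fun l => y (k.succAbove l).succ)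
          (fun l => a (k.succAbove l).succ) (fun l => b (k.succAbove l).succ) *
        Vdet n (fun l => x (k.succAbove l).succ) (fun l => y (k.succAbove l).succ)
          (fun l => c (k.succAbove l).succ) (fun l => d (k.succAbove l).succ)))) with hC
  set xt : Fin (2*n+1) → F := fun k => x k.succ with hxt
  set yt : Fin (2*n+1) → F := fun k => y k.succ with hyt
  have hm1 := Hform_mul n n (Vdet_Hform xt yt a b) (Vdet_Hform xt yt c d)
  rw [← two_mul] at hm1
  have hm2 := Submodule.sum_mem (Hform F (2*n)) (t := Finset.univ)
    (f := fun (k : Fin (2*n+1)) (p : F × F) => C k *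
      ∏ l : Fin (2*n), (p.1 * yt (k.succAbove l) - xt (k.succAbove l) * p.2))
    (fun k _ => Hform_const (2*n) (Hform_prod (2*n) (fun l => xt (k.succAbove l))
      (fun l => yt (k.succAbove l))) (C k))
  have hz := Hform_eq_zero (2*n) (Submodule.sub_mem _ hm1 hm2) xt yt
    (fun i j hij => hxy _ _ (fun h => hij (Fin.succ_injective _ h))) ?_
  · have h0 := congrFun hz (x 0, y 0)
    have hx : (Fin.cons (x 0) xt : Fin (2*n+1+1) → F) = x := Fin.cons_self_tail x
    have hy : (Fin.cons (y 0) yt : Fin (2*n+1+1) → F) = y := Fin.cons_self_tail y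
    simp only [Pi.sub_apply, Pi.mul_apply, Finset.sum_apply, Pi.zero_apply, hx, hy] at h0
    exact sub_eq_zero.1 h0
  · intro k
    simp only [Pi.sub_apply, Pi.mul_apply, Finset.sum_apply]
    rw [Finset.sum_eq_single k, sub_eq_zero]
    · obtain ⟨ε, h1, h2⟩ := Vdet_coll (n := n) (Fin.cons (xt k) xt : Fin (2*n+1+1) → F)
        (Fin.cons (yt k) yt : Fin (2*n+1+1) → F) k (by simp) (by simp) (by
          by_contra hcon
          push Not at hcon
          simp only [Fin.cons_zero] at hcon
          have := hxy 0 k.succ (Fin.succ_ne_zero k).symm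
          apply this
          change x 0 * yt k - xt k * y 0 = 0
          rw [hcon.1, hcon.2]; ring)
      rw [h2 a b, h2 c d]
      simp only [Fin.cons_succ, hC]
      linear_combination ((a 0 * b k.succ - a k.succ * b 0) *
        ((∏ l : Fin (2*n), (xt k * yt (k.succAbove l) - xt (k.succAbove l) * yt k)) *
        Vdet n (fun l => xt (k.succAbove l)) (fun l => yt (k.succAbove l))
          (fun l => a (k.succAbove l).succ) (fun l => b (k.succAbove l).succ))) *
        ((c 0 * d k.succ - c k.succ * d 0) *
        ((∏ l : Fin (2*n), (xt k * yt (k.succAbove l) - xt (k.succAbove l) * yt k)) *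
        Vdet n (fun l => xt (k.succAbove l)) (fun l => yt (k.succAbove l))
          (fun l => c (k.succAbove l).succ) (fun l => d (k.succAbove l).succ))) * h1
    · intro j _ hjk
      obtain ⟨l, hl⟩ := Fin.exists_succAbove_eq hjk.symm
      rw [Finset.prod_eq_zero (Finset.mem_univ l), mul_zero]
      rw [hl]; ring
    · intro h; exact absurd (Finset.mem_univ k) h

lemma pf_main (n : ℕ) : ∀ (x y a b c d : Fin (2 * n) → F)
    (_ : ∀ i j : Fin (2 * n), i ≠ j → x i * y j - x j * y i ≠ 0),
    pf (Matrix.of fun i j : Fin (2 * n) =>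
        (a i * b j - a j * b i) * (c i * d j - c j * d i) / (x i * y j - x j * y i)) * Dprod x y =
      Vdet n x y a b * Vdet n x y c d := by
  induction n with
  | zero =>
    intro x y a b c d _
    have h : ∀ A : Matrix (Fin (2 * 0)) (Fin (2 * 0)) F, pf A = 1 := by
      intro A
      have : pfMatchings 0 = {1} := by decide
      simp [pf, this]
    rw [h]
    simp [Dprod, Vdet]
  | succ n ih =>
    intro x y a b c d hxy
    change Fin (2*n+1+1) → F at x y a b c d
    change ∀ i j : Fin (2*n+1+1), i ≠ j → x i * y j - x j * y i ≠ 0 at hxy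
    rw [Vdet_mul_expand x y a b c d hxy]
    have h1 := pf_succ (n := n) (Matrix.of fun i j : Fin (2*n+1+1) =>
        (a i * b j - a j * b i) * (c i * d j - c j * d i) / (x i * y j - x j * y i))
    refine (congrArg (fun z => z * Dprod (m := 2*n+1+1) x y) h1).trans ?_
    rw [Finset.sum_mul]
    refine Finset.sum_congr rfl fun k _ => ?_
    have hk := ih (fun l => x (k.succAbove l).succ) (fun l => y (k.succAbove l).succ)
      (fun l => a (k.succAbove l).succ) (fun l => b (k.succAbove l).succ)
      (fun l => c (k.succAbove l).succ) (fun l => d (k.succAbove l).succ)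
      (fun i j hij => hxy _ _ fun h => hij
        (Fin.succAbove_right_injective (Fin.succ_injective _ h)))
    rw [← hk, Dprod_succ, Dprod_succAbove _ _ k, Fin.prod_univ_succAbove _ k]
    have hne := hxy 0 k.succ (Fin.succ_ne_zero k).symm
    have hs : ((-1 : F) ^ (k : ℕ)) * (-1) ^ (k : ℕ) = 1 := by rw [← mul_pow]; simp
    have hd : (a 0 * b k.succ - a k.succ * b 0) * (c 0 * d k.succ - c k.succ * d 0) /
      (x 0 * y k.succ - x k.succ * y 0) * (x 0 * y k.succ - x k.succ * y 0) =
      (a 0 * b k.succ - a k.succ * b 0) * (c 0 * d k.succ - c k.succ * d 0) :=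
        div_mul_cancel₀ _ hne
    rw [← hd]
    simp only [Matrix.of_apply]
    set q := (a 0 * b k.succ - a k.succ * b 0) * (c 0 * d k.succ - c k.succ * d 0) /
      (x 0 * y k.succ - x k.succ * y 0)
    set P := pf (n := n) (Matrix.submatrix (Matrix.of fun i j : Fin (2*n+1+1) =>
        (a i * b j - a j * b i) * (c i * d j - c j * d i) / (x i * y j - x j * y i))
        (fun l => (k.succAbove l).succ) (fun l => (k.succAbove l).succ)) with hP
    change _ = q * _ * (_ * (P * _)) * _
    linear_combination (q * (x 0 * y k.succ - x k.succ * y 0) * P *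
      (∏ l : Fin (2*n), (x k.succ * y (k.succAbove l).succ - x (k.succAbove l).succ * y k.succ)) *
      (∏ l : Fin (2*n), (x 0 * y (k.succAbove l).succ - x (k.succAbove l).succ * y 0)) *
      Dprod (fun l => x (k.succAbove l).succ) (fun l => y (k.succAbove l).succ)) * hs

end



/-- Theorem `fundamental`:
`Pf[ (a_i b_j − a_j b_i)(c_i d_j − c_j d_i)/(x_i y_j − x_j y_i) ]
  = V^n(X,Y;A,B) V^n(X,Y;C,D) / Π_{i<j}(x_i y_j − x_j y_i)`. -/
theorem pf_eq_Vdet_general (F : Type*) [Field F] (n : ℕ) (hn : 1 ≤ n)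
    (x y a b c d : Fin (2 * n) → F)
    (hxy : ∀ i j : Fin (2 * n), i ≠ j → x i * y j - x j * y i ≠ 0) :
    pf (Matrix.of fun i j : Fin (2 * n) =>
        (a i * b j - a j * b i) * (c i * d j - c j * d i) / (x i * y j - x j * y i)) =
      Vdet n x y a b * Vdet n x y c d /
        ∏ i : Fin (2 * n), ∏ j ∈ Ioi i, (x i * y j - x j * y i) := by
  exact (eq_div_iff (Dprod_ne_zero x y hxy)).2 (pf_main n x y a b c d hxy)
end

section
/- Let n ≥ 1 and let x_i, a_i, b_i (1≤i≤2n) be variables and t an indeterminate. Then Pf[ (a_i b_j − a_j b_i)/(1 − t x_i x_j) ]_{1≤i<j≤2n} = (−1)^{n(n−1)/2} t^{n(n−1)/2} V^n(X, 1+tX^2; A, B) / Π_{1≤i<j≤2n}(1 − t x_i x_j). -/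
open Finset

namespace PfC
open Equiv Equiv.Perm

def e (n : ℕ) : Fin n × Fin 2 ≃ Fin (2 * n) :=
  finProdFinEquiv.trans (finCongr (Nat.mul_comm n 2))

def eLex (n : ℕ) : Fin n × Fin 2 ≃ Fin (2 * n) :=
  (Equiv.prodComm _ _).trans finProdFinEquiv

lemma e_val (n : ℕ) (i : Fin n) (k : Fin 2) : (e n (i, k)).1 = 2 * i.1 + k.1 := by
  simp [e]; omega

lemma eLex_val (n : ℕ) (i : Fin n) (k : Fin 2) : (eLex n (i, k)).1 = n * k.1 + i.1 := by
  simp [eLex]; omega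

lemma e_zero (n : ℕ) (i : Fin n) (h : 2 * i.1 < 2 * n) : (⟨2 * i.1, h⟩ : Fin (2 * n)) = e n (i, 0) := by
  ext; simp [e_val]

lemma e_one (n : ℕ) (i : Fin n) (h : 2 * i.1 + 1 < 2 * n) :
    (⟨2 * i.1 + 1, h⟩ : Fin (2 * n)) = e n (i, 1) := by
  ext; simp [e_val]

lemma mem_pf {n : ℕ} (τ : Perm (Fin (2 * n))) : τ ∈ pfMatchings n ↔
    (∀ i, τ (e n (i, 0)) < τ (e n (i, 1))) ∧
      ∀ i j, i < j → τ (e n (i, 0)) < τ (e n (j, 0)) := by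
  simp only [pfMatchings, Finset.mem_filter, Finset.mem_univ, true_and, e_zero, e_one]

lemma pf_eq {R : Type*} [CommRing R] {n : ℕ} (A : Matrix (Fin (2 * n)) (Fin (2 * n)) R) :
    pf A = ∑ σ ∈ pfMatchings n, ((sign σ : ℤ) : R) *
      ∏ i : Fin n, A (σ (e n (i, 0))) (σ (e n (i, 1))) := by
  simp only [pf, e_zero, e_one]

/-- pair permutations, componentwise -/
def P {n : ℕ} (ρ : Fin 2 → Perm (Fin n)) : Perm (Fin (2 * n)) :=
  (e n).permCongr (prodCongrLeft ρ)

def Q {n : ℕ} (ε : Fin n → Perm (Fin 2)) : Perm (Fin (2 * n)) :=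
  (e n).permCongr (prodCongrRight ε)

@[simp] lemma P_apply {n : ℕ} (ρ : Fin 2 → Perm (Fin n)) (i : Fin n) (k : Fin 2) :
    P ρ (e n (i, k)) = e n (ρ k i, k) := by simp [P, Equiv.permCongr_apply]

@[simp] lemma Q_apply {n : ℕ} (ε : Fin n → Perm (Fin 2)) (i : Fin n) (k : Fin 2) :
    Q ε (e n (i, k)) = e n (i, ε i k) := by simp [Q, Equiv.permCongr_apply]

@[simp] lemma sign_P {n : ℕ} (ρ : Fin 2 → Perm (Fin n)) : sign (P ρ) = ∏ k, sign (ρ k) := by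
  simp [P, sign_prodCongrLeft]

@[simp] lemma sign_Q {n : ℕ} (ε : Fin n → Perm (Fin 2)) : sign (Q ε) = ∏ k, sign (ε k) := by
  simp [Q, sign_prodCongrRight]

lemma perm2 (p : Perm (Fin 2)) : p = 1 ∨ p = swap 0 1 := by
  revert p; decide

lemma exists_E {n : ℕ} (s : Fin 2 → Fin n) (hs : s 0 ≠ s 1) :
    ∃ q : Perm (Fin 2), ∀ p : Perm (Fin 2), s (p 0) < s (p 1) ↔ p = q := by
  have h10 : (1 : Perm (Fin 2)) ≠ swap 0 1 := by decide
  rcases lt_or_gt_of_ne hs with h | h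
  · refine ⟨1, fun p => ?_⟩
    rcases perm2 p with rfl | rfl
    · simp [h]
    · simp [h.le]
  · refine ⟨swap 0 1, fun p => ?_⟩
    rcases perm2 p with rfl | rfl
    · exact iff_of_false (by simpa using h.le) h10
    · simp [h]

lemma existsUnique_h {n : ℕ} (σ : Perm (Fin (2 * n))) :
    ∃ h : Perm (Fin n) × (Fin n → Perm (Fin 2)), ∀ h' : Perm (Fin n) × (Fin n → Perm (Fin 2)),
      σ * P (fun _ => h'.1) * Q h'.2 ∈ pfMatchings n ↔ h' = h := by
  have hE : ∀ j : Fin n, ∃ q : Perm (Fin 2), ∀ p : Perm (Fin 2),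
      σ (e n (j, p 0)) < σ (e n (j, p 1)) ↔ p = q := fun j =>
    exists_E (fun k => σ (e n (j, k))) (by simp)
  choose E hE using hE
  let m : Fin n → Fin (2 * n) := fun j => σ (e n (j, E j 0))
  have hm : Function.Injective m := by
    intro i j hij
    have := (e n).injective (σ.injective hij)
    exact (Prod.ext_iff.1 this).1
  refine ⟨(Tuple.sort m, fun i => E (Tuple.sort m i)), fun h' => ?_⟩
  obtain ⟨ρ, ε⟩ := h'
  have key : ρ = Tuple.sort m ↔ ∀ i j, i < j → m (ρ i) < m (ρ j) := by
    rw [Tuple.eq_sort_iff]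
    constructor
    · rintro ⟨h1, -⟩ i j hij
      exact lt_of_le_of_ne (h1 hij.le) (fun h => hij.ne (ρ.injective (hm h)))
    · intro h
      refine ⟨StrictMono.monotone (fun i j hij => h i j hij), fun i j hij h2 => ?_⟩
      exact absurd (ρ.injective (hm h2)) hij.ne
  rw [mem_pf]
  simp only [Perm.mul_apply, Q_apply, P_apply, hE, Prod.mk.injEq]
  constructor
  · rintro ⟨h1, h2⟩
    have hρ : ρ = Tuple.sort m := key.2 (fun i j hij => by simpa [m, h1] using h2 i j hij)
    refine ⟨hρ, ?_⟩
    funext i; rw [h1, hρ]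
  · rintro ⟨h1, h2⟩
    have h3 : ∀ i, ε i = E (ρ i) := by intro i; rw [h2, h1]
    refine ⟨h3, fun i j hij => ?_⟩
    rw [h3, h3]; exact key.1 h1 i j hij

section
variable {R : Type*} [CommRing R] {n : ℕ}

def g (c : Fin (2 * n) → Fin (2 * n) → R) (a b : Fin (2 * n) → R) (σ : Perm (Fin (2 * n))) : R :=
  ((sign σ : ℤ) : R) * ∏ i : Fin n, (a (σ (e n (i, 0))) * b (σ (e n (i, 1))) *
    c (σ (e n (i, 0))) (σ (e n (i, 1))))

lemma g_P (c : Fin (2 * n) → Fin (2 * n) → R) (a b : Fin (2 * n) → R) (σ : Perm (Fin (2 * n)))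
    (ρ : Perm (Fin n)) : g c a b (σ * P fun _ => ρ) = g c a b σ := by
  unfold g
  have h1 : sign (σ * P fun _ => ρ) = sign σ := by
    simp
  rw [h1]
  congr 1
  simp only [Perm.mul_apply, P_apply]
  exact Equiv.prod_comp ρ (fun i => a (σ (e n (i, 0))) * b (σ (e n (i, 1))) *
    c (σ (e n (i, 0))) (σ (e n (i, 1))))

lemma sum_perm2 (F : Perm (Fin 2) → R) : ∑ p, F p = F 1 + F (swap 0 1) := by
  have : (univ : Finset (Perm (Fin 2))) = {1, swap 0 1} := by decide
  rw [this, Finset.sum_pair (by decide)]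

lemma f_expand (c : Fin (2 * n) → Fin (2 * n) → R) (hc : ∀ i j, c i j = c j i)
    (a b : Fin (2 * n) → R) (σ : Perm (Fin (2 * n))) :
    ((sign σ : ℤ) : R) * ∏ i : Fin n, ((a (σ (e n (i, 0))) * b (σ (e n (i, 1))) -
      a (σ (e n (i, 1))) * b (σ (e n (i, 0)))) * c (σ (e n (i, 0))) (σ (e n (i, 1))))
    = ∑ ε : Fin n → Perm (Fin 2), g c a b (σ * Q ε) := by
  have h1 : ∀ i : Fin n, ((a (σ (e n (i, 0))) * b (σ (e n (i, 1))) -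
      a (σ (e n (i, 1))) * b (σ (e n (i, 0)))) * c (σ (e n (i, 0))) (σ (e n (i, 1))))
      = ∑ p : Perm (Fin 2), ((sign p : ℤ) : R) * (a (σ (e n (i, p 0))) * b (σ (e n (i, p 1))) *
        c (σ (e n (i, p 0))) (σ (e n (i, p 1)))) := by
    intro i
    rw [sum_perm2]
    simp [sign_swap, hc (σ (e n (i, 1))) (σ (e n (i, 0)))]
    ring
  simp only [h1]
  rw [Finset.prod_univ_sum, Finset.mul_sum]
  simp only [Fintype.piFinset_univ]
  refine Finset.sum_congr rfl fun ε _ => ?_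
  simp only [g, Perm.mul_apply, Q_apply, map_mul, sign_Q, Finset.prod_mul_distrib]
  push_cast
  ring

lemma Q_inv (ε : Fin n → Perm (Fin 2)) : Q ε⁻¹ = (Q ε)⁻¹ := by
  symm
  rw [inv_eq_iff_mul_eq_one]
  ext1 p
  obtain ⟨⟨i, k⟩, rfl⟩ := (e n).surjective p
  simp

theorem step1 (c : Fin (2 * n) → Fin (2 * n) → R) (hc : ∀ i j, c i j = c j i)
    (a b : Fin (2 * n) → R) :
    (n.factorial : R) * pf (Matrix.of fun i j => (a i * b j - a j * b i) * c i j) =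
      ∑ σ, g c a b σ := by
  rw [pf_eq]
  simp only [Matrix.of_apply]
  have h2 : ∀ σ : Perm (Fin (2 * n)), ∑ ε : Fin n → Perm (Fin 2), g c a b (σ * Q ε) =
      ∑ ε : Fin n → Perm (Fin 2), g c a b (σ * (Q ε)⁻¹) := by
    intro σ
    rw [← Equiv.sum_comp (Equiv.inv _)]
    simp [Q_inv]
  simp only [f_expand c hc, h2]
  have h3 : ∀ h : Perm (Fin n) × (Fin n → Perm (Fin 2)),
      ∑ σ ∈ pfMatchings n, g c a b (σ * (Q h.2)⁻¹) =
      ∑ σ, if σ * P (fun _ => h.1) * Q h.2 ∈ pfMatchings n then g c a b σ else 0 := by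
    intro h
    rw [← Equiv.sum_comp (Equiv.mulRight (P (fun _ => h.1) * Q h.2)⁻¹)]
    have h4 : ∀ σ : Perm (Fin (2 * n)), σ * (P (fun _ => h.1) * Q h.2)⁻¹ * P (fun _ => h.1) * Q h.2
        = σ := fun σ => by group
    have h5 : ∀ σ : Perm (Fin (2 * n)), g c a b (σ * (P (fun _ => h.1) * Q h.2)⁻¹) =
        g c a b (σ * (Q h.2)⁻¹) := fun σ => by
      rw [← g_P c a b _ h.1]
      congr 1; group
    simp only [Equiv.coe_mulRight, h4, h5]
    simp
  calc _ = ∑ h : Perm (Fin n) × (Fin n → Perm (Fin 2)),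
        ∑ σ ∈ pfMatchings n, g c a b (σ * (Q h.2)⁻¹) := by
        rw [Fintype.sum_prod_type]
        simp only [Finset.sum_const, Finset.card_univ, Fintype.card_perm, Fintype.card_fin,
          nsmul_eq_mul]
        rw [Finset.sum_comm]
    _ = ∑ σ, g c a b σ := by
        simp only [h3]
        rw [Finset.sum_comm]
        refine Finset.sum_congr rfl fun σ _ => ?_
        obtain ⟨h0, hh⟩ := existsUnique_h σ
        simp [hh]
end

section
variable {R : Type*} [CommRing R]

lemma prod_pairs (n : ℕ) (c : R) : ∏ i : Fin n, ∏ _j ∈ Ioi i, c = c ^ n.choose 2 := by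
  simp only [Finset.prod_const, Fin.card_Ioi]
  rw [Finset.prod_pow_eq_pow_sum, Fin.sum_univ_eq_sum_range (fun i => n - 1 - i),
    Finset.sum_range_reflect (fun i => i), Finset.sum_range_id, Nat.choose_two_right]

lemma prod_Ioi_ite {ι : Type*} [LinearOrder ι] [Fintype ι] [LocallyFiniteOrderTop ι] (F : ι → ι → R) :
    ∏ i : ι, ∏ j ∈ Ioi i, F i j = ∏ i : ι, ∏ j : ι, if i < j then F i j else 1 := by
  refine Finset.prod_congr rfl fun i _ => ?_
  rw [← Finset.prod_filter]
  congr 1; ext; simp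

theorem cauchy (t : R) : ∀ (n : ℕ) (u v : Fin n → R) (c : Fin n → Fin n → R)
    (_ : ∀ i j, c i j * (1 - t * u i * v j) = 1),
    (Matrix.of c).det * ∏ i, ∏ j, (1 - t * u i * v j) =
      t ^ n.choose 2 * ((∏ i, ∏ j ∈ Ioi i, (u i - u j)) * ∏ i, ∏ j ∈ Ioi i, (v i - v j)) := by
  intro n
  induction n with
  | zero => intro u v c _; simp
  | succ n ih =>
    intro u v c hc
    let B : Matrix (Fin (n + 1)) (Fin (n + 1)) R := Matrix.of fun i j =>
      if i = 0 then c 0 j else c i j - (1 - t * u 0 * v 0) * c i 0 * c 0 j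
    have hB : (Matrix.of c).det = B.det := by
      refine Matrix.det_eq_of_forall_row_eq_smul_add_const
        (fun i => if i = 0 then 0 else (1 - t * u 0 * v 0) * c i 0) 0 (by simp) ?_
      intro i j
      by_cases h : i = 0 <;> simp [B, h]
    have hS : ∀ i j : Fin n, B i.succ j.succ =
        (t * (u 0 - u i.succ) * c i.succ 0) * (c i.succ j.succ * ((v 0 - v j.succ) * c 0 j.succ)) := by
      intro i j
      simp only [B, Matrix.of_apply, Fin.succ_ne_zero, if_false]
      linear_combination (-c i.succ j.succ * c 0 j.succ * (1 - t * u 0 * v j.succ)) * hc i.succ 0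
        - c i.succ j.succ * hc 0 j.succ
        + (1 - t * u 0 * v 0) * c i.succ 0 * c 0 j.succ * hc i.succ j.succ
    have hB0 : ∀ i : Fin n, B i.succ 0 = 0 := by
      intro i
      simp only [B, Matrix.of_apply, Fin.succ_ne_zero, if_false]
      linear_combination (- c i.succ 0) * hc 0 0
    have hB00 : B 0 0 = c 0 0 := by simp [B]
    have hsub : B.submatrix Fin.succ Fin.succ = Matrix.of fun i j : Fin n =>
        (t * (u 0 - u i.succ) * c i.succ 0) *
          (Matrix.of fun i j : Fin n => ((v 0 - v j.succ) * c 0 j.succ) *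
            (Matrix.of fun i j : Fin n => c i.succ j.succ) i j) i j := by
      ext i j
      simp only [Matrix.submatrix_apply, hS, Matrix.of_apply]
      ring
    have hdet : B.det = c 0 0 * ((∏ i : Fin n, (t * (u 0 - u i.succ) * c i.succ 0)) *
        ((∏ j : Fin n, ((v 0 - v j.succ) * c 0 j.succ)) *
          (Matrix.of fun i j : Fin n => c i.succ j.succ).det)) := by
      rw [Matrix.det_succ_column_zero, Fin.sum_univ_succ]
      simp only [hB0, hB00]
      simp only [Fin.val_zero, pow_zero, one_mul, mul_zero, zero_mul, Finset.sum_const_zero,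
        add_zero]
      rw [← Matrix.det_mul_row, ← Matrix.det_mul_column, ← hsub]
      rfl
    have ih' := ih (fun i => u i.succ) (fun i => v i.succ) (fun i j => c i.succ j.succ)
      (fun i j => hc _ _)
    have p1 : (∏ i : Fin n, c i.succ 0) * ∏ i : Fin n, (1 - t * u i.succ * v 0) = 1 := by
      rw [← Finset.prod_mul_distrib]; simp [hc]
    have p2 : (∏ i : Fin n, c 0 i.succ) * ∏ i : Fin n, (1 - t * u 0 * v i.succ) = 1 := by
      rw [← Finset.prod_mul_distrib]; simp [hc]
    have p0 := hc 0 0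
    rw [hB, hdet]
    simp only [Fin.prod_univ_succ, Fin.prod_Ioi_zero, Fin.prod_Ioi_succ, Finset.prod_mul_distrib,
      Finset.prod_const, Finset.card_univ, Fintype.card_fin]
    have hch : (n + 1).choose 2 = n + n.choose 2 := by
      rw [Nat.choose_succ_succ' n 1, Nat.choose_one_right]
    rw [hch, pow_add]
    generalize (Matrix.of fun i j : Fin n => c i.succ j.succ).det = D at *
    generalize (∏ i : Fin n, ∏ j : Fin n, (1 - t * u i.succ * v j.succ)) = E at *
    generalize (∏ i : Fin n, c i.succ 0) = C1 at *
    generalize (∏ i : Fin n, c 0 i.succ) = C2 at *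
    generalize (∏ i : Fin n, (1 - t * u i.succ * v 0)) = D1 at *
    generalize (∏ i : Fin n, (1 - t * u 0 * v i.succ)) = D2 at *
    generalize (∏ i : Fin n, (u 0 - u i.succ)) = U at *
    generalize (∏ i : Fin n, (v 0 - v i.succ)) = V at *
    generalize t ^ n.choose 2 = T at *
    calc _ = (c 0 0 * (1 - t * u 0 * v 0)) * (C1 * D1) * (C2 * D2) * (t ^ n * U * V) * (D * E) := by
          ring
      _ = _ := by rw [p0, p1, p2, ih']; ring
end

section
variable {R : Type*} [CommRing R] {n : ℕ}

lemma prod_rel {ι : Type*} [LinearOrder ι] [Fintype ι] (T : ι → ι → Prop) [DecidableRel T]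
    (hT : ∀ p q, p < q → (T p q ↔ ¬ T q p)) (hT' : ∀ p, ¬ T p p)
    (d : ι → ι → R) (hd : ∀ p q, d p q = d q p) :
    ∏ p, ∏ q, (if T p q then d p q else 1) = ∏ p, ∏ q, if p < q then d p q else 1 := by
  have h1 : ∀ p q, (if T p q then d p q else 1) =
      (if p < q ∧ T p q then d p q else 1) * (if q < p ∧ T p q then d p q else 1) := by
    intro p q
    rcases lt_trichotomy p q with h | h | h
    · simp [h, h.not_gt]
    · subst h; simp [hT']
    · simp [h, h.not_gt]
  simp only [h1, Finset.prod_mul_distrib]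
  rw [Finset.prod_comm (f := fun p q => if q < p ∧ T p q then d p q else 1)]
  simp only [← Finset.prod_mul_distrib]
  refine Finset.prod_congr rfl fun p _ => Finset.prod_congr rfl fun q _ => ?_
  by_cases h : p < q
  · have := hT p q h
    by_cases h2 : T q p
    · simp [h, h2, this, hd q p]
    · simp [h, h2, this]
  · simp [h]

lemma eLex_zz (i j : Fin n) : eLex n (i, 0) < eLex n (j, 0) ↔ i < j := by
  rw [Fin.lt_def, eLex_val, eLex_val, Fin.lt_def]; simp

lemma eLex_oo (i j : Fin n) : eLex n (i, 1) < eLex n (j, 1) ↔ i < j := by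
  rw [Fin.lt_def, eLex_val, eLex_val, Fin.lt_def]; simp

lemma eLex_zo (i j : Fin n) : eLex n (i, 0) < eLex n (j, 1) := by
  rw [Fin.lt_def, eLex_val, eLex_val]; simp; omega

lemma eLex_oz (i j : Fin n) : ¬ eLex n (i, 1) < eLex n (j, 0) := (eLex_zo j i).not_gt

lemma prod_lex (d : Fin n × Fin 2 → Fin n × Fin 2 → R) :
    (∏ x, ∏ y, if eLex n x < eLex n y then d x y else 1) =
      (∏ i, ∏ j ∈ Ioi i, d (i, 0) (j, 0)) * (∏ i, ∏ j ∈ Ioi i, d (i, 1) (j, 1)) *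
        ∏ i, ∏ j, d (i, 0) (j, 1) := by
  simp only [prod_Ioi_ite, Fintype.prod_prod_type, Fin.prod_univ_two, eLex_zz, eLex_oo, eLex_zo, eLex_oz,
    if_true, if_false, Finset.prod_const_one, mul_one, Finset.prod_mul_distrib]
  ring

lemma D_split (σ : Perm (Fin (2 * n))) (d : Fin (2 * n) → Fin (2 * n) → R)
    (hd : ∀ p q, d p q = d q p) :
    ∏ p, ∏ q ∈ Ioi p, d p q =
      (∏ i, ∏ j ∈ Ioi i, d (σ (e n (i, 0))) (σ (e n (j, 0)))) *
      (∏ i, ∏ j ∈ Ioi i, d (σ (e n (i, 1))) (σ (e n (j, 1)))) *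
        ∏ i, ∏ j, d (σ (e n (i, 0))) (σ (e n (j, 1))) := by
  let w : Fin n × Fin 2 ≃ Fin (2 * n) := (e n).trans σ
  rw [prod_Ioi_ite, ← prod_rel (fun p q => eLex n (w.symm p) < eLex n (w.symm q)) _ _ d hd]
  · rw [← Equiv.prod_comp w]
    simp only [← Equiv.prod_comp w (fun q => ite _ _ _), Equiv.symm_apply_apply]
    rw [prod_lex (fun x y => d (w x) (w y))]
    rfl
  · intro p q hpq
    have : eLex n (w.symm p) ≠ eLex n (w.symm q) := by simpa using hpq.ne
    rw [not_lt]
    exact ⟨le_of_lt, fun h => lt_of_le_of_ne h this⟩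
  · simp

/-- the shuffle -/
def sh (n : ℕ) : Perm (Fin (2 * n)) := (eLex n).symm.trans (e n)

lemma sh_apply (x : Fin n × Fin 2) : sh n (eLex n x) = e n x := by simp [sh]

lemma sign_sh : ((sign (sh n) : ℤ) : R) = (-1) ^ n.choose 2 := by
  have h0 : ((sign (sh n) : ℤ)) = (-1) ^ n.choose 2 := by
    rw [Equiv.Perm.sign_eq_prod_prod_Ioi]
    push_cast
    rw [prod_Ioi_ite, ← Equiv.prod_comp (eLex n)]
    simp only [← Equiv.prod_comp (eLex n) (fun q => ite _ _ _), sh_apply]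
    rw [prod_lex (fun x y => (((if e n x < e n y then 1 else -1 : ℤˣ)) : ℤ))]
    have h1 : ∀ (k : Fin 2) (i j : Fin n), e n (i, k) < e n (j, k) ↔ i < j := by
      intro k i j
      rw [Fin.lt_def, e_val, e_val, Fin.lt_def]; omega
    have h2 : ∀ (i j : Fin n), e n (i, 0) < e n (j, 1) ↔ ¬ j < i := by
      intro i j
      rw [Fin.lt_def, e_val, e_val, Fin.lt_def, Fin.val_zero, Fin.val_one]; omega
    simp only [h1, h2]
    have h3 : (∏ i : Fin n, ∏ j ∈ Ioi i, (((if i < j then 1 else -1 : ℤˣ)) : ℤ)) = 1 := by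
      refine Finset.prod_eq_one fun i _ => Finset.prod_eq_one fun j hj => ?_
      simp [Finset.mem_Ioi.1 hj]
    rw [h3, one_mul, one_mul, Finset.prod_comm, ← prod_pairs, prod_Ioi_ite]
    refine Finset.prod_congr rfl fun i _ => Finset.prod_congr rfl fun j _ => ?_
    by_cases h : i < j <;> simp [h]
  rw [h0]; push_cast; rfl

/-- homogeneous Vandermonde matrix -/
def W (t : R) (u : Fin n → R) : Matrix (Fin n) (Fin n) R :=
  Matrix.of fun i j => u i ^ (n - 1 - j.1) * (1 + t * u i ^ 2) ^ j.1

lemma det_W (t : R) (u : Fin n → R) : (W t u).det =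
    (∏ i, ∏ j ∈ Ioi i, (u i - u j)) * ∏ i, ∏ j ∈ Ioi i, (1 - t * u i * u j) := by
  have : W t u = Matrix.projVandermonde (fun i => 1 + t * u i ^ 2) u := by
    ext i j
    rw [Matrix.projVandermonde_apply, W, Matrix.of_apply, Fin.val_rev, mul_comm]
    congr 2; omega
  rw [this, Matrix.det_projVandermonde]
  simp only [← Finset.prod_mul_distrib]
  refine Finset.prod_congr rfl fun p _ => Finset.prod_congr rfl fun q _ => ?_
  ring

lemma step5 (t : R) (x : Fin (2 * n) → R) (c : Fin (2 * n) → Fin (2 * n) → R)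
    (hc : ∀ i j, i ≠ j → c i j * (1 - t * x i * x j) = 1) (σ : Perm (Fin (2 * n))) :
    (Matrix.of fun i j : Fin n => c (σ (e n (i, 0))) (σ (e n (j, 1)))).det *
      (∏ p, ∏ q ∈ Ioi p, (1 - t * x p * x q)) =
    t ^ n.choose 2 * ((W t fun i => x (σ (e n (i, 0)))).det * (W t fun i => x (σ (e n (i, 1)))).det) := by
  rw [D_split σ (fun p q => 1 - t * x p * x q) (fun p q => by ring), det_W, det_W]
  have := cauchy t n (fun i => x (σ (e n (i, 0)))) (fun i => x (σ (e n (i, 1))))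
    (fun i j => c (σ (e n (i, 0))) (σ (e n (j, 1)))) (fun i j => hc _ _ (by simp))
  linear_combination ((∏ i, ∏ j ∈ Ioi i, (1 - t * x (σ (e n (i, 0))) * x (σ (e n (j, 0))))) *
    (∏ i, ∏ j ∈ Ioi i, (1 - t * x (σ (e n (i, 1))) * x (σ (e n (j, 1)))))) * this

lemma step4 (c : Fin (2 * n) → Fin (2 * n) → R) (a b : Fin (2 * n) → R) :
    (n.factorial : R) * ∑ σ, g c a b σ = ∑ σ : Perm (Fin (2 * n)), ((sign σ : ℤ) : R) *
      ((∏ i : Fin n, a (σ (e n (i, 0)))) * (∏ i : Fin n, b (σ (e n (i, 1)))) *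
      (Matrix.of fun i j : Fin n => c (σ (e n (i, 0))) (σ (e n (j, 1)))).det) := by
  have h1 : ∀ ρ : Perm (Fin n), ∑ σ, g c a b σ = ∑ σ, g c a b (σ * P ![1, ρ]) := fun ρ =>
    (Equiv.sum_comp (Equiv.mulRight (P ![1, ρ])) (g c a b)).symm
  calc _ = ∑ ρ : Perm (Fin n), ∑ σ, g c a b (σ * P ![1, ρ]) := by
        simp only [← h1]
        simp [Fintype.card_perm]
    _ = _ := by
        rw [Finset.sum_comm]
        refine Finset.sum_congr rfl fun σ _ => ?_
        rw [← Matrix.det_transpose, Matrix.det_apply', Finset.mul_sum, Finset.mul_sum]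
        refine Finset.sum_congr rfl fun ρ _ => ?_
        simp only [g, Perm.mul_apply, P_apply, map_mul, sign_P, Finset.prod_mul_distrib,
          Fin.prod_univ_two, Matrix.transpose_apply, Matrix.of_apply]
        simp only [Matrix.cons_val_zero, Matrix.cons_val_one, Perm.one_apply, map_one, one_mul]
        rw [Equiv.prod_comp ρ (fun i => b (σ (e n (i, 1))))]
        push_cast
        ring

lemma step3 (t : R) (x a b : Fin (2 * n) → R) :
    (n.factorial : R) * (n.factorial : R) * Vdet n x (fun i => 1 + t * x i ^ 2) a b =
    (-1) ^ n.choose 2 * ∑ σ : Perm (Fin (2 * n)), ((sign σ : ℤ) : R) *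
      ((∏ i : Fin n, a (σ (e n (i, 0)))) * (∏ i : Fin n, b (σ (e n (i, 1)))) *
      ((W t fun i => x (σ (e n (i, 0)))).det * (W t fun i => x (σ (e n (i, 1)))).det)) := by
  let F : Perm (Fin (2 * n)) → R := fun σ => ((sign σ : ℤ) : R) *
    ((∏ i : Fin n, a (σ (e n (i, 0))) * W t (fun i => x (σ (e n (i, 0)))) i i) *
     (∏ i : Fin n, b (σ (e n (i, 1))) * W t (fun i => x (σ (e n (i, 1)))) i i))
  have hV : Vdet n x (fun i => 1 + t * x i ^ 2) a b = (-1) ^ n.choose 2 * ∑ σ, F σ := by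
    rw [Vdet, Matrix.det_apply', ← sign_sh, Finset.mul_sum,
      ← Equiv.sum_comp (Equiv.mulRight (sh n))]
    refine Finset.sum_congr rfl fun σ _ => ?_
    rw [← Equiv.prod_comp (eLex n), Fintype.prod_prod_type]
    have h0 : ∀ i : Fin n, (eLex n (i, 0)).1 = i.1 := fun i => by simp [eLex_val]
    have h1 : ∀ i : Fin n, (eLex n (i, 1)).1 = n + i.1 := fun i => by simp [eLex_val]
    have h2 : ∀ i : Fin n, 2 * n - 1 - (n + i.1) = n - 1 - i.1 := fun i => by omega
    simp only [Fin.prod_univ_two, Equiv.coe_mulRight, Perm.mul_apply, sh_apply, Matrix.of_apply,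
      h0, h1, Fin.is_lt, if_true, F, W, map_mul, h2, Finset.prod_mul_distrib]
    simp only [Nat.not_lt.2 (Nat.le_add_right n _), if_false, Nat.add_sub_cancel_left,
      Finset.prod_mul_distrib]
    push_cast
    ring
  rw [hV]
  have h1 : ∀ ρ : Fin 2 → Perm (Fin n), ∑ σ, F σ = ∑ σ, F (σ * P ρ) := fun ρ =>
    (Equiv.sum_comp (Equiv.mulRight (P ρ)) F).symm
  have h2 : (n.factorial : R) * (n.factorial : R) * ∑ σ, F σ =
      ∑ ρ : Perm (Fin n), ∑ ρ' : Perm (Fin n), ∑ σ, F (σ * P ![ρ, ρ']) := by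
    simp only [← h1]
    simp [Fintype.card_perm, mul_assoc]
  have h3 : ∀ σ, ∑ ρ : Perm (Fin n), ∑ ρ' : Perm (Fin n), F (σ * P ![ρ, ρ']) =
      ((sign σ : ℤ) : R) *
      ((∏ i : Fin n, a (σ (e n (i, 0)))) * (∏ i : Fin n, b (σ (e n (i, 1)))) *
      ((W t fun i => x (σ (e n (i, 0)))).det * (W t fun i => x (σ (e n (i, 1)))).det)) := by
    intro σ
    rw [Matrix.det_apply', Matrix.det_apply', Finset.sum_mul_sum, Finset.mul_sum, Finset.mul_sum]
    refine Finset.sum_congr rfl fun ρ _ => ?_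
    rw [Finset.mul_sum, Finset.mul_sum]
    refine Finset.sum_congr rfl fun ρ' _ => ?_
    simp only [F, W, Perm.mul_apply, P_apply, map_mul, sign_P, Finset.prod_mul_distrib,
      Fin.prod_univ_two, Matrix.of_apply]
    simp only [Matrix.cons_val_zero, Matrix.cons_val_one]
    rw [Equiv.prod_comp ρ' (fun i => b (σ (e n (i, 1)))),
      Equiv.prod_comp ρ (fun i => a (σ (e n (i, 0))))]
    push_cast
    ring
  simp only [← h3]
  rw [mul_left_comm, h2]
  congr 1
  simp only [Finset.sum_comm (s := (univ : Finset (Perm (Fin n))))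
    (t := (univ : Finset (Perm (Fin (2 * n)))))]

theorem main_ring [IsDomain R] [CharZero R] (t : R) (x a b : Fin (2 * n) → R)
    (c : Fin (2 * n) → Fin (2 * n) → R) (hs : ∀ i j, c i j = c j i)
    (hc : ∀ i j, i ≠ j → c i j * (1 - t * x i * x j) = 1) :
    pf (Matrix.of fun i j => (a i * b j - a j * b i) * c i j) *
      (∏ p, ∏ q ∈ Ioi p, (1 - t * x p * x q)) =
    (-1) ^ n.choose 2 * t ^ n.choose 2 * Vdet n x (fun i => 1 + t * x i ^ 2) a b := by
  have hn : (n.factorial : R) * (n.factorial : R) ≠ 0 := by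
    simp [Nat.factorial_ne_zero]
  apply mul_left_cancel₀ hn
  have e1 := step1 c hs a b
  have e4 := step4 c a b
  have e3 := step3 t x a b
  rw [← e1] at e4
  have hsq : ((-1 : R) ^ n.choose 2) * (-1) ^ n.choose 2 = 1 := by
    rw [← mul_pow]; simp
  calc _ = ((n.factorial : R) * ((n.factorial : R) *
        pf (Matrix.of fun i j => (a i * b j - a j * b i) * c i j))) *
      (∏ p, ∏ q ∈ Ioi p, (1 - t * x p * x q)) := by ring
    _ = t ^ n.choose 2 * ∑ σ : Perm (Fin (2 * n)), ((sign σ : ℤ) : R) *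
      ((∏ i : Fin n, a (σ (e n (i, 0)))) * (∏ i : Fin n, b (σ (e n (i, 1)))) *
      ((W t fun i => x (σ (e n (i, 0)))).det * (W t fun i => x (σ (e n (i, 1)))).det)) := by
        rw [e4, Finset.sum_mul, Finset.mul_sum]
        refine Finset.sum_congr rfl fun σ _ => ?_
        linear_combination ((sign σ : ℤ) : R) *
          ((∏ i : Fin n, a (σ (e n (i, 0)))) * (∏ i : Fin n, b (σ (e n (i, 1))))) *
            step5 t x c hc σ
    _ = _ := by
        linear_combination (-(-1) ^ n.choose 2 * t ^ n.choose 2) * e3 - t ^ n.choose 2 *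
          (∑ σ : Perm (Fin (2 * n)), ((sign σ : ℤ) : R) *
      ((∏ i : Fin n, a (σ (e n (i, 0)))) * (∏ i : Fin n, b (σ (e n (i, 1)))) *
      ((W t fun i => x (σ (e n (i, 0)))).det * (W t fun i => x (σ (e n (i, 1)))).det))) * hsq

end

section
variable {R S : Type*} [CommRing R] [CommRing S] {n : ℕ}

lemma pf_congr (A B : Matrix (Fin (2 * n)) (Fin (2 * n)) R) (h : ∀ i j, i ≠ j → A i j = B i j) :
    pf A = pf B := by
  rw [pf_eq, pf_eq]
  refine Finset.sum_congr rfl fun σ _ => ?_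
  congr 1
  exact Finset.prod_congr rfl fun i _ => h _ _ (by simp)

lemma pf_map (φ : R →+* S) (A : Matrix (Fin (2 * n)) (Fin (2 * n)) R) :
    φ (pf A) = pf (A.map φ) := by
  simp [pf_eq]

lemma Vdet_map (φ : R →+* S) (x y a b : Fin (2 * n) → R) :
    φ (Vdet n x y a b) = Vdet n (φ ∘ x) (φ ∘ y) (φ ∘ a) (φ ∘ b) := by
  rw [Vdet, Vdet, RingHom.map_det]
  congr 1
  ext i j
  simp [apply_ite φ]

theorem main_field (F : Type*) [Field F] (n : ℕ)
    (x a b : Fin (2 * n) → F) (t : F)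
    (ht : ∀ i j : Fin (2 * n), i ≠ j → 1 - t * x i * x j ≠ 0) :
    pf (Matrix.of fun i j : Fin (2 * n) => (a i * b j - a j * b i) / (1 - t * x i * x j)) *
      (∏ i : Fin (2 * n), ∏ j ∈ Ioi i, (1 - t * x i * x j)) =
      (-1) ^ n.choose 2 * t ^ n.choose 2 * Vdet n x (fun i => 1 + t * x i ^ 2) a b := by
  let Pol := MvPolynomial (Option (Fin (2 * n) × Fin 3)) ℤ
  let val : Option (Fin (2 * n) × Fin 3) → F := fun o => o.elim t fun p => ![x, a, b] p.2 p.1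
  let φ : Pol →+* F := MvPolynomial.eval₂Hom (Int.castRingHom F) val
  let p : Ideal Pol := RingHom.ker φ
  have : p.IsPrime := RingHom.ker_isPrime φ
  let L := Localization.AtPrime p
  have hu : ∀ y : p.primeCompl, IsUnit (φ y) := fun y => by
    have : φ (y : Pol) ≠ 0 := fun h => y.2 ((RingHom.mem_ker).2 h)
    exact this.isUnit
  let ψ : L →+* F := IsLocalization.lift hu
  have hψ : ∀ q : Pol, ψ (algebraMap Pol L q) = φ q := fun q => IsLocalization.lift_eq hu q
  have hinj : Function.Injective (algebraMap Pol L) :=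
    IsLocalization.injective L p.primeCompl_le_nonZeroDivisors
  have : IsDomain L := IsLocalization.isDomain_of_le_nonZeroDivisors L p.primeCompl_le_nonZeroDivisors
  have : CharZero L := charZero_of_injective_algebraMap hinj
  let T : L := algebraMap Pol L (MvPolynomial.X none)
  let X (k : Fin 3) (i : Fin (2 * n)) : L := algebraMap Pol L (MvPolynomial.X (some (i, k)))
  have hT : ψ T = t := (hψ _).trans (MvPolynomial.eval₂Hom_X' _ _ _)
  have hX0 : ∀ i, ψ (X 0 i) = x i := fun i => (hψ _).trans (MvPolynomial.eval₂Hom_X' _ _ _)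
  have hX1 : ∀ i, ψ (X 1 i) = a i := fun i => (hψ _).trans (MvPolynomial.eval₂Hom_X' _ _ _)
  have hX2 : ∀ i, ψ (X 2 i) = b i := fun i => (hψ _).trans (MvPolynomial.eval₂Hom_X' _ _ _)
  have hunit : ∀ i j, i ≠ j → IsUnit (1 - T * X 0 i * X 0 j) := by
    intro i j hij
    have h1 : (1 - T * X 0 i * X 0 j) = algebraMap Pol L (1 - MvPolynomial.X none *
      MvPolynomial.X (some (i, 0)) * MvPolynomial.X (some (j, 0))) := by simp [T, X]
    rw [h1]
    refine IsLocalization.map_units L (⟨_, ?_⟩ : p.primeCompl)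
    intro hmem
    have h2 := (RingHom.mem_ker).1 hmem
    rw [← hψ, ← h1] at h2
    simp only [map_sub, map_mul, map_one, hT, hX0] at h2
    exact ht i j hij h2
  let c : Fin (2 * n) → Fin (2 * n) → L := fun i j => Ring.inverse (1 - T * X 0 i * X 0 j)
  have hs : ∀ i j, c i j = c j i := fun i j => by simp only [c]; congr 1; ring
  have hc : ∀ i j, i ≠ j → c i j * (1 - T * X 0 i * X 0 j) = 1 := fun i j hij =>
    Ring.inverse_mul_cancel _ (hunit i j hij)
  have main := congrArg ψ (main_ring T (X 0) (X 1) (X 2) c hs hc)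
  simp only [map_mul, map_pow, map_neg, map_one, map_prod, map_sub, pf_map, Vdet_map, hT, hX0] at main
  have v0 : ψ ∘ X 0 = x := funext hX0
  have v1 : ψ ∘ X 1 = a := funext hX1
  have v2 : ψ ∘ X 2 = b := funext hX2
  have v3 : (ψ ∘ fun i => 1 + T * X 0 i ^ 2) = fun i => 1 + t * x i ^ 2 := by
    funext i; simp [hT, hX0]
  rw [v0, v1, v2, v3] at main
  rw [← main]
  congr 1
  refine pf_congr _ _ fun i j hij => ?_
  have h := congrArg ψ (hc i j hij)
  simp only [map_mul, map_sub, map_one, hT, hX0] at h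
  simp only [Matrix.of_apply, Matrix.map_apply, map_mul, map_sub, hX1, hX2]
  rw [div_eq_iff (ht i j hij), mul_assoc, h, mul_one]
end

end PfC

/-- Corollary `cor:pfaff-det`, equation `eq:cauchy`:
`Pf[ (a_i b_j − a_j b_i)/(1 − t x_i x_j) ]
  = (−1)^{n(n−1)/2} t^{n(n−1)/2} V^n(X,1+tX²;A,B) / Π_{i<j}(1 − t x_i x_j)`. -/
theorem pf_cauchy (F : Type*) [Field F] (n : ℕ) (hn : 1 ≤ n)
    (x a b : Fin (2 * n) → F) (t : F)
    (ht : ∀ i j : Fin (2 * n), i ≠ j → 1 - t * x i * x j ≠ 0) :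
    pf (Matrix.of fun i j : Fin (2 * n) => (a i * b j - a j * b i) / (1 - t * x i * x j)) =
      (-1) ^ n.choose 2 * t ^ n.choose 2 * Vdet n x (fun i => 1 + t * x i ^ 2) a b /
        ∏ i : Fin (2 * n), ∏ j ∈ Ioi i, (1 - t * x i * x j) := by
  rw [eq_div_iff]
  · exact PfC.main_field F n x a b t ht
  · refine Finset.prod_ne_zero_iff.2 fun i _ => Finset.prod_ne_zero_iff.2 fun j hj => ?_
    exact ht i j (Finset.mem_Ioi.1 hj).ne
end
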